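/- arXiv:2002.03253 — 7 statements merged into one kernel-verified Lean document; each statement's English description precedes it below -/
import Mathlib

section
/- Let H be a complex Hilbert space and let A be a unital operator algebra, i.e. a norm-closed subalgebra of B(H) with 1 ∈ A. Then the set r_A = {a ∈ A : a + a* ≥ 0} of real positive elements of A equals the norm closure of the set ℝ₊·F_A = {t·x : t ∈ ℝ, t ≥ 0, x ∈ A, ‖1 − x‖ ≤ 1}. -/
/-!
Accretivity of `a` means `0 ≤ Re ⟪a h, h⟫` for all `h`, a norm-closed condition on `a`.

If `‖1 - x‖ ≤ 1`, expanding `‖h - x h‖² ≤ ‖h‖²` gives `‖x h‖² ≤ 2 Re ⟪x h, h⟫`, so `x` and its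
nonnegative multiples are accretive; hence so are their norm limits.

Conversely, if `a` is accretive and `ε > 0`, then `b = a + ε` satisfies `Re ⟪b h, h⟫ ≥ ε ‖h‖²`, so
`‖h - s b h‖² ≤ (1 - 2 s ε + s² ‖b‖²) ‖h‖² ≤ ‖h‖²` for small `s > 0`. Thus
`b = s⁻¹ • (s • b)` lies in `ℝ₊ · 𝔉_A`, and `b → a` as `ε → 0`.
-/

set_option maxHeartbeats 1000000
set_option synthInstance.maxHeartbeats 1000000

open ContinuousLinearMap

lemma isPositive_add_adjoint_iff {H : Type*} [NormedAddCommGroup H] [InnerProductSpace ℂ H]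
    [CompleteSpace H] (a : H →L[ℂ] H) :
    (a + adjoint a).IsPositive ↔ ∀ h : H, 0 ≤ (inner ℂ (a h) h).re := by
  have key : ∀ h : H, (a + adjoint a).reApplyInnerSelf h = 2 * (inner ℂ (a h) h).re := by
    intro h
    rw [reApplyInnerSelf_apply, add_apply, inner_add_left, adjoint_inner_left, map_add,
      inner_re_symm h (a h), RCLike.re_to_complex]
    ring
  rw [isPositive_def']
  constructor
  · rintro ⟨-, h2⟩ h
    have := h2 h
    rw [key] at this
    linarith
  · intro h2
    refine ⟨IsSelfAdjoint.add_star_self a, fun h => ?_⟩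
    rw [key]
    linarith [h2 h]

lemma norm_sub_smul_sq {H : Type*} [NormedAddCommGroup H] [InnerProductSpace ℂ H]
    (s : ℝ) (b : H →L[ℂ] H) (h : H) :
    ‖(1 - s • b) h‖ ^ 2 = ‖h‖ ^ 2 - 2 * s * (inner ℂ (b h) h).re + s ^ 2 * ‖b h‖ ^ 2 := by
  have e : (1 - s • b) h = h - (s : ℂ) • b h := by simp
  rw [e, @norm_sub_sq ℂ, inner_smul_right, norm_smul, mul_pow]
  have hre : (inner ℂ h (b h)).re = (inner ℂ (b h) h).re := inner_re_symm (𝕜 := ℂ) h (b h)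
  simp [hre]
  ring

/-- The quantitative core: a strictly accretive operator, scaled by a small positive number,
lies within distance `1` of the identity. -/
lemma exists_norm_one_sub_smul_le {H : Type*} [NormedAddCommGroup H] [InnerProductSpace ℂ H]
    (b : H →L[ℂ] H) {ε : ℝ} (hε : 0 < ε)
    (hb : ∀ h : H, ε * ‖h‖ ^ 2 ≤ (inner ℂ (b h) h).re) :
    ∃ s : ℝ, 0 < s ∧ ‖1 - s • b‖ ≤ 1 := by
  have hM : 0 < ‖b‖ ^ 2 + 1 := by positivity
  refine ⟨ε / (‖b‖ ^ 2 + 1), by positivity, ?_⟩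
  set s := ε / (‖b‖ ^ 2 + 1) with hs
  have hs0 : 0 < s := by positivity
  have hsε : s * (‖b‖ ^ 2 + 1) = ε := by rw [hs]; field_simp
  refine ContinuousLinearMap.opNorm_le_bound _ zero_le_one fun h => ?_
  rw [one_mul]
  refine (sq_le_sq₀ (norm_nonneg _) (norm_nonneg _)).1 ?_
  rw [norm_sub_smul_sq]
  have h1 : ‖b h‖ ^ 2 ≤ ‖b‖ ^ 2 * ‖h‖ ^ 2 := by
    rw [← mul_pow]
    exact pow_le_pow_left₀ (norm_nonneg _) (b.le_opNorm h) 2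
  have h2 : s ^ 2 * ‖b‖ ^ 2 ≤ s * ε := by rw [← hsε]; nlinarith [sq_nonneg s]
  have h3 : s * (ε * ‖h‖ ^ 2) ≤ s * (inner ℂ (b h) h).re :=
    mul_le_mul_of_nonneg_left (hb h) hs0.le
  have h4 : s ^ 2 * ‖b h‖ ^ 2 ≤ s ^ 2 * (‖b‖ ^ 2 * ‖h‖ ^ 2) :=
    mul_le_mul_of_nonneg_left h1 (sq_nonneg s)
  have h5 : s ^ 2 * ‖b‖ ^ 2 * ‖h‖ ^ 2 ≤ s * ε * ‖h‖ ^ 2 :=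
    mul_le_mul_of_nonneg_right h2 (sq_nonneg _)
  have h6 : 0 ≤ s * ε * ‖h‖ ^ 2 := by positivity
  linarith

/-- For a unital operator algebra `A ⊆ B(H)`, the set of real positive (accretive) elements
of `A` equals the norm closure of `ℝ₊ · 𝔉_A`, where `𝔉_A = {x ∈ A : ‖1 - x‖ ≤ 1}`. -/
theorem stmt_0 {H : Type*} [NormedAddCommGroup H] [InnerProductSpace ℂ H] [CompleteSpace H]
    (A : Subalgebra ℂ (H →L[ℂ] H)) (hA : IsClosed (A : Set (H →L[ℂ] H))) :
    {a : H →L[ℂ] H | a ∈ A ∧ (a + adjoint a).IsPositive} =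
      closure {a : H →L[ℂ] H | ∃ t : ℝ, 0 ≤ t ∧ ∃ x ∈ A, ‖1 - x‖ ≤ 1 ∧ a = t • x} := by
  simp only [isPositive_add_adjoint_iff]
  have hsmul : ∀ (t : ℝ) {x : H →L[ℂ] H}, x ∈ A → t • x ∈ A := fun t x hx => by
    simpa using A.smul_mem hx (t : ℂ)
  apply Set.Subset.antisymm
  · rintro a ⟨haA, ha⟩
    rw [Metric.mem_closure_iff]
    intro δ hδ
    obtain ⟨ε, hε, hεδ⟩ := exists_between hδ
    obtain ⟨s, hs, hs1⟩ := exists_norm_one_sub_smul_le (a + ε • 1) hε fun h => by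
      have e : (a + ε • (1 : H →L[ℂ] H)) h = a h + (ε : ℂ) • h := by simp
      rw [e, inner_add_left, inner_smul_left, inner_self_eq_norm_sq_to_K]
      have := ha h
      simpa [← Complex.ofReal_pow] using this
    refine ⟨a + ε • 1, ⟨s⁻¹, by positivity, s • (a + ε • 1),
      hsmul _ (A.add_mem haA (hsmul _ A.one_mem)), hs1, ?_⟩, ?_⟩
    · rw [smul_smul, inv_mul_cancel₀ hs.ne', one_smul]
    · rw [dist_eq_norm, sub_add_cancel_left, norm_neg, norm_smul, Real.norm_of_nonneg hε.le]
      have h1 : ‖(1 : H →L[ℂ] H)‖ ≤ 1 := ContinuousLinearMap.norm_id_le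
      nlinarith
  · refine closure_minimal ?_ ?_
    · rintro _ ⟨t, ht, x, hxA, hx, rfl⟩
      refine ⟨hsmul t hxA, fun h => ?_⟩
      have e : (t • x) h = (t : ℂ) • x h := by simp
      have h1 : ‖(1 - (1 : ℝ) • x) h‖ ≤ ‖h‖ := by
        rw [one_smul]
        simpa using (1 - x).le_of_opNorm_le hx h
      have h2 := pow_le_pow_left₀ (norm_nonneg _) h1 2
      rw [norm_sub_smul_sq] at h2
      have h3 : 0 ≤ (inner ℂ (x h) h).re := by nlinarith [sq_nonneg ‖x h‖]
      rw [e, inner_smul_left]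
      simpa using mul_nonneg ht h3
    · refine hA.inter ?_
      change IsClosed {a : H →L[ℂ] H | ∀ h : H, 0 ≤ (inner ℂ (a h) h).re}
      rw [Set.ofPred_forall]
      refine isClosed_iInter fun h => isClosed_le continuous_const ?_
      fun_prop
end

section
/- Let C be a unital C*-algebra and let A be a norm-closed subalgebra of C containing the unit of C. If φ : A → ℂ is a linear functional which is real positive, i.e. Re φ(a) ≥ 0 whenever a ∈ A satisfies a + a* ≥ 0, then there exists a positive linear functional ψ : C → ℂ (meaning ψ(c) ≥ 0 whenever 0 ≤ c in C) whose restriction to A equals φ. -/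
/-!
The real positive elements `{c | 0 ≤ c + star c}` form a real convex cone in `C`, and every
`y : C` is moved into it by adding a large multiple of `1 ∈ A`. The M. Riesz extension theorem
(`riesz_extension`) therefore extends `Re φ` to a real functional `g` on `C` that is nonnegative on
the cone. The complex functional `ψ` with real part `g` extends `φ`, since a complex functional is
determined by its real part. For `0 ≤ c`, the elements `I • c` and `-(I • c)` are skew-adjoint, so
both lie in the cone and `g (I • c) = 0`; hence `ψ c = g c ≥ 0`.
-/

/-- The cone of real positive elements: those `c` with `0 ≤ c + star c`. -/
def realPositiveCone (C : Type*) [CStarAlgebra C] [PartialOrder C] [StarOrderedRing C] :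
    PointedCone ℝ C where
  carrier := {c | 0 ≤ c + star c}
  zero_mem' := by simp
  add_mem' := by
    intro a b ha hb
    have h := add_nonneg ha hb
    simp only [Set.mem_setOf_eq, star_add]
    convert h using 1
    abel
  smul_mem' := by
    rintro ⟨r, hr⟩ a ha
    have h : 0 ≤ r • (a + star a) := smul_nonneg hr ha
    simpa [smul_add] using h

theorem mem_realPositiveCone {C : Type*} [CStarAlgebra C] [PartialOrder C] [StarOrderedRing C]
    {c : C} : c ∈ realPositiveCone C ↔ 0 ≤ c + star c := Iff.rfl

theorem norm_smul_one_add_mem_realPositiveCone {C : Type*} [CStarAlgebra C] [PartialOrder C]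
    [StarOrderedRing C] (y : C) : ‖y‖ • (1 : C) + y ∈ realPositiveCone C := by
  have h1 : -algebraMap ℝ C ‖y + star y‖ ≤ y + star y :=
    IsSelfAdjoint.neg_algebraMap_norm_le_self (IsSelfAdjoint.add_star_self y)
  have h2 : ‖y + star y‖ ≤ ‖y‖ + ‖y‖ := (norm_add_le _ _).trans_eq (by rw [norm_star])
  have h3 : algebraMap ℝ C ‖y + star y‖ ≤ algebraMap ℝ C (‖y‖ + ‖y‖) :=
    algebraMap_mono C h2
  have h4 : 0 ≤ algebraMap ℝ C (‖y‖ + ‖y‖) + (y + star y) :=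
    (neg_le_iff_add_nonneg'.mp h1).trans (by gcongr)
  rw [mem_realPositiveCone]
  convert h4 using 1
  simp only [Algebra.algebraMap_eq_smul_one, star_add, star_smul, star_one, star_trivial, add_smul]
  abel

set_option maxHeartbeats 1000000
set_option synthInstance.maxHeartbeats 1000000

open scoped ComplexOrder

/-- A real positive linear functional on a closed unital subalgebra of a unital C*-algebra
extends to a positive linear functional on the whole C*-algebra. -/
theorem stmt_2 {C : Type*} [CStarAlgebra C] [PartialOrder C] [StarOrderedRing C]
    (A : Subalgebra ℂ C) (hA : IsClosed (A : Set C))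
    (φ : A →ₗ[ℂ] ℂ)
    (hφ : ∀ a : A, 0 ≤ (a : C) + star (a : C) → 0 ≤ (φ a).re) :
    ∃ ψ : C →ₗ[ℂ] ℂ, (∀ c : C, 0 ≤ c → 0 ≤ ψ c) ∧ ∀ a : A, ψ (a : C) = φ a := by
  obtain ⟨g, hg, hpos⟩ := riesz_extension (realPositiveCone C)
    { domain := A.toSubmodule.restrictScalars ℝ
      toFun := Complex.reLm ∘ₗ φ.restrictScalars ℝ }
    (fun x hx => hφ x hx)
    (fun y => ⟨⟨‖y‖ • (1 : C), (A.toSubmodule.restrictScalars ℝ).smul_mem _ A.one_mem⟩,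
      norm_smul_one_add_mem_realPositiveCone y⟩)
  have hgA (a : A) : g a = (φ a).re := hg a
  refine ⟨Module.Dual.extendRCLike g, fun c hc => ?_, fun a => ?_⟩
  · have hsa : star c = c := (IsSelfAdjoint.of_nonneg hc).star_eq
    have h0 : 0 ≤ g c := hpos c (mem_realPositiveCone.2 (by rw [hsa]; exact add_nonneg hc hc))
    have h1 : 0 ≤ g (Complex.I • c) := hpos _ (mem_realPositiveCone.2 (by simp [hsa]))
    have h2 : 0 ≤ g (-(Complex.I • c)) := hpos _ (mem_realPositiveCone.2 (by simp [hsa]))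
    rw [map_neg] at h2
    have h3 : g (Complex.I • c) = 0 := by linarith
    simpa [Module.Dual.extendRCLike_apply, h3] using h0
  · have h1 : g (Complex.I • (a : C)) = (φ (Complex.I • a)).re := hgA (Complex.I • a)
    rw [Module.Dual.extendRCLike_apply]
    apply Complex.ext <;> simp [h1, hgA]
end

section
/- Let A ⊆ B(H) and B ⊆ B(K) be unital operator algebras and let T : A → B be a real positive linear map. Then ‖T(a)‖ ≤ ‖T(1)‖·‖a‖ for all a ∈ A; in particular T is bounded with operator norm ‖T‖ = ‖T(1)‖. -/
/-!
Let `‖a‖ < 1`. For `N` large and every unimodular `ω`, the truncated Herglotz series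
`p_ω = 1 + 2 ∑_{k=1}^N ω^k a^k` is real positive: `1 - ω a` is invertible and, with
`g = (1 - ω a) h`, the number `Re ⟪g, p_ω g⟫` equals
`‖h‖² - ‖a h‖² - 2 Re ⟪(1 - ω a) h, (ω a)^(N+1) h⟫`, which is nonnegative once
`4 ‖a‖^(N+1) ≤ 1 - ‖a‖²` (`herglotz_accretive`). As `p_ω` is a polynomial in `a`, it lies in the
algebra, so `Re ⟪v, T(p_ω) v⟫ ≥ 0` for every `v`.

Take `v = x + ω y` and average over the `(N+2)`-th roots of unity `ω`. Orthogonality of characters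
leaves only `Re (⟪x, T(1) x⟫ + ⟪y, T(1) y⟫ + 2 ⟪y, T(a) x⟫) ≥ 0` (`re_block_nonneg`), i.e. the
positivity of a `2 × 2` operator matrix. Choosing `y` to be a negative multiple of `T(a) x` with
`‖y‖ = ‖x‖` yields `‖T(a) x‖ ≤ ‖T(1)‖ ‖x‖`; the general inequality follows by scaling.
-/

set_option maxHeartbeats 1000000
set_option synthInstance.maxHeartbeats 1000000

open ContinuousLinearMap

/-- Coefficients `1, 2, 2, …` of the Herglotz series `(1 + z) / (1 - z)`. -/
def herglotzCoeff (k : ℕ) : ℂ := if k = 0 then 1 else 2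

/-- The numerator of the truncated Herglotz series: it differs from `1 + a` by `2 a^(N+1)`. -/
lemma herglotz_mul {R : Type*} [Ring R] [Algebra ℂ R] (a : R) (N : ℕ) :
    (∑ k ∈ Finset.range (N + 1), herglotzCoeff k • a ^ k) * (1 - a)
      = 1 + a - (2 : ℂ) • a ^ (N + 1) := by
  induction N with
  | zero =>
    simp only [herglotzCoeff, zero_add, Finset.range_one, Finset.sum_singleton, if_true, pow_zero,
      one_smul, one_mul, pow_one, two_smul]
    abel
  | succ N ih =>
    rw [Finset.sum_range_succ, add_mul, ih]
    simp only [herglotzCoeff, Nat.succ_ne_zero, if_false, smul_mul_assoc, mul_sub, mul_one,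
      ← pow_succ]
    abel

lemma herglotz_accretive {H : Type*} [NormedAddCommGroup H] [InnerProductSpace ℂ H]
    [CompleteSpace H] (a : H →L[ℂ] H) (ha : ‖a‖ < 1) (N : ℕ)
    (hN : 4 * ‖a‖ ^ (N + 1) ≤ 1 - ‖a‖ ^ 2) (g : H) :
    0 ≤ (inner ℂ g ((∑ k ∈ Finset.range (N + 1), herglotzCoeff k • a ^ k) g)).re := by
  obtain ⟨u, hu⟩ : IsUnit (1 - a) := isUnit_one_sub_of_norm_lt_one ha
  set p := ∑ k ∈ Finset.range (N + 1), herglotzCoeff k • a ^ k with hp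
  obtain ⟨h, rfl⟩ : ∃ h, (1 - a) h = g := by
    refine ⟨(↑u⁻¹ : H →L[ℂ] H) g, ?_⟩
    rw [← hu, ← mul_apply_eq_comp, Units.mul_inv]
    rfl
  have h1 : p ((1 - a) h) = h + a h - (2 : ℂ) • (a ^ (N + 1)) h := by
    rw [← mul_apply_eq_comp, hp, herglotz_mul]
    rfl
  rw [h1]
  have h2 : (1 - a) h = h - a h := rfl
  rw [h2]
  have hah : ‖a h‖ ≤ ‖a‖ * ‖h‖ := a.le_opNorm h
  have hpow : ‖(a ^ (N + 1)) h‖ ≤ ‖a‖ ^ (N + 1) * ‖h‖ :=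
    ((a ^ (N + 1)).le_opNorm h).trans
      (mul_le_mul_of_nonneg_right (norm_pow_le' a N.succ_pos) (norm_nonneg _))
  have e1 : (inner ℂ (h - a h) (h + a h)).re = ‖h‖ ^ 2 - ‖a h‖ ^ 2 := by
    have hs : (inner ℂ (a h) h).re = (inner ℂ h (a h)).re := inner_re_symm (𝕜 := ℂ) _ _
    have hh : (inner ℂ h h).re = ‖h‖ ^ 2 := inner_self_eq_norm_sq (𝕜 := ℂ) h
    have hh' : (inner ℂ (a h) (a h)).re = ‖a h‖ ^ 2 := inner_self_eq_norm_sq (𝕜 := ℂ) (a h)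
    simp only [inner_sub_left, inner_add_right, Complex.add_re, Complex.sub_re, hs, hh, hh']
    ring
  have e2 : (inner ℂ (h - a h) ((a ^ (N + 1)) h)).re ≤ 2 * ‖h‖ * (‖a‖ ^ (N + 1) * ‖h‖) := by
    refine (Complex.re_le_norm _).trans ((norm_inner_le_norm _ _).trans ?_)
    refine mul_le_mul ?_ hpow (norm_nonneg _) (by positivity)
    refine (norm_sub_le _ _).trans ?_
    nlinarith [norm_nonneg h]
  rw [inner_sub_right, inner_smul_right, Complex.sub_re, e1]
  have e3 : ((2 : ℂ) * inner ℂ (h - a h) ((a ^ (N + 1)) h)).re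
      = 2 * (inner ℂ (h - a h) ((a ^ (N + 1)) h)).re := by
    simp
  rw [e3]
  have e4 : ‖a h‖ ^ 2 ≤ ‖a‖ ^ 2 * ‖h‖ ^ 2 := by
    rw [← mul_pow]
    exact pow_le_pow_left₀ (norm_nonneg _) hah 2
  nlinarith [mul_le_mul_of_nonneg_right hN (sq_nonneg ‖h‖)]

/-- Orthogonality relation for the `n`-th roots of unity. -/
lemma sum_root_pow {n : ℕ} {ζ : ℂ} (hζ : IsPrimitiveRoot ζ n) (m : ℕ) :
    ∑ j ∈ Finset.range n, (ζ ^ j) ^ m = if n ∣ m then (n : ℂ) else 0 := by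
  have hc : ∀ j, (ζ ^ j) ^ m = (ζ ^ m) ^ j := fun j => by rw [← pow_mul, ← pow_mul, mul_comm]
  simp only [hc]
  split_ifs with h
  · rw [(hζ.pow_eq_one_iff_dvd m).2 h]
    simp
  · have h1 : ζ ^ m ≠ 1 := fun h' => h ((hζ.pow_eq_one_iff_dvd m).1 h')
    rw [geom_sum_eq h1, ← pow_mul, mul_comm, pow_mul, hζ.pow_eq_one]
    simp

/-- An operator is real positive iff its numerical range lies in the closed right half-plane. -/
lemma re_inner_nonneg_iff {K : Type*} [NormedAddCommGroup K] [InnerProductSpace ℂ K]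
    [CompleteSpace K] (S : K →L[ℂ] K) :
    (S + adjoint S).IsPositive ↔ ∀ v, 0 ≤ (inner ℂ v (S v)).re := by
  have key : ∀ v, (inner ℂ ((S + adjoint S) v) v).re = 2 * (inner ℂ v (S v)).re := by
    intro v
    have hs : (inner ℂ (S v) v).re = (inner ℂ v (S v)).re := inner_re_symm (𝕜 := ℂ) _ _
    rw [_root_.add_apply, inner_add_left, adjoint_inner_left, Complex.add_re, hs]
    ring
  rw [ContinuousLinearMap.isPositive_def]
  constructor
  · rintro ⟨_, h⟩ v
    have := h v
    rw [ContinuousLinearMap.reApplyInnerSelf_apply] at this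
    change 0 ≤ (inner ℂ ((S + adjoint S) v) v).re at this
    rw [key] at this
    linarith
  · intro h
    refine ⟨?_, fun v => ?_⟩
    · exact (IsSelfAdjoint.add_star_self S).isSymmetric
    · rw [ContinuousLinearMap.reApplyInnerSelf_apply]
      change 0 ≤ (inner ℂ ((S + adjoint S) v) v).re
      rw [key]
      linarith [h v]

/-- Averaging `⟪x + ω y, (∑ ω^k c_k S_k) (x + ω y)⟫` over the roots of unity `ω` of an order larger
than the degree plus one isolates the coefficients `S 0` and `S 1`. -/
lemma sum_roots_inner {K : Type*} [NormedAddCommGroup K] [InnerProductSpace ℂ K]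
    (S : ℕ → K →L[ℂ] K) (N : ℕ) (hN : 1 ≤ N) {ζ : ℂ} (hζ : IsPrimitiveRoot ζ (N + 2)) (x y : K) :
    ∑ j ∈ Finset.range (N + 2), inner ℂ (x + (ζ ^ j) • y)
        ((∑ k ∈ Finset.range (N + 1), (herglotzCoeff k * (ζ ^ j) ^ k) • S k) (x + (ζ ^ j) • y))
      = ((N + 2 : ℕ) : ℂ) * (inner ℂ x (S 0 x) + inner ℂ y (S 0 y) + 2 * inner ℂ y (S 1 x)) := by
  have hone : ∀ j, ‖ζ ^ j‖ = 1 := fun j => by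
    rw [norm_pow, hζ.norm'_eq_one (by omega), one_pow]
  have hconj : ∀ j, (starRingEnd ℂ) (ζ ^ j) = (ζ ^ j) ^ (N + 1) := fun j => by
    have h1 : (ζ ^ j) ^ (N + 1) * ζ ^ j = 1 := by
      rw [← pow_succ, ← pow_mul, mul_comm, pow_mul, hζ.pow_eq_one, one_pow]
    rw [← Complex.inv_eq_conj (hone j)]
    exact (eq_inv_of_mul_eq_one_left h1).symm
  have hcc : ∀ j, (starRingEnd ℂ) (ζ ^ j) * ζ ^ j = 1 := fun j => by
    rw [← Complex.inv_eq_conj (hone j)]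
    exact inv_mul_cancel₀ (fun h => by simpa [h] using hone j)
  have hterm : ∀ j, inner ℂ (x + (ζ ^ j) • y)
        ((∑ k ∈ Finset.range (N + 1), (herglotzCoeff k * (ζ ^ j) ^ k) • S k) (x + (ζ ^ j) • y))
      = ∑ k ∈ Finset.range (N + 1), herglotzCoeff k *
          ((ζ ^ j) ^ k * (inner ℂ x (S k x) + inner ℂ y (S k y))
            + (ζ ^ j) ^ (k + 1) * inner ℂ x (S k y)
            + (ζ ^ j) ^ (k + (N + 1)) * inner ℂ y (S k x)) := by
    intro j
    rw [_root_.sum_apply, inner_sum]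
    refine Finset.sum_congr rfl fun k _ => ?_
    simp only [_root_.smul_apply, map_add, map_smul, inner_smul_right, inner_add_left,
      inner_add_right, inner_smul_left]
    have := hcc j
    rw [pow_add _ k (N + 1), ← hconj, pow_succ]
    linear_combination (herglotzCoeff k * (ζ ^ j) ^ k * inner ℂ y (S k y)) * this
  simp only [hterm]
  rw [Finset.sum_comm]
  have hk : ∀ k ∈ Finset.range (N + 1), ∑ j ∈ Finset.range (N + 2), herglotzCoeff k *
          ((ζ ^ j) ^ k * (inner ℂ x (S k x) + inner ℂ y (S k y))
            + (ζ ^ j) ^ (k + 1) * inner ℂ x (S k y)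
            + (ζ ^ j) ^ (k + (N + 1)) * inner ℂ y (S k x))
      = (if k = 0 then ((N + 2 : ℕ) : ℂ) * (inner ℂ x (S 0 x) + inner ℂ y (S 0 y)) else 0)
        + (if k = 1 then ((N + 2 : ℕ) : ℂ) * (2 * inner ℂ y (S 1 x)) else 0) := by
    intro k hk
    have hk' : k < N + 1 := Finset.mem_range.1 hk
    rw [← Finset.mul_sum, Finset.sum_add_distrib, Finset.sum_add_distrib, ← Finset.sum_mul,
      ← Finset.sum_mul, ← Finset.sum_mul, sum_root_pow hζ, sum_root_pow hζ, sum_root_pow hζ]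
    have d1 : N + 2 ∣ k ↔ k = 0 :=
      ⟨fun h => Nat.eq_zero_of_dvd_of_lt h (by omega), fun h => h ▸ dvd_zero _⟩
    have d2 : ¬ (N + 2 ∣ k + 1) := fun h => by
      have := Nat.le_of_dvd (by omega) h
      omega
    have d3 : N + 2 ∣ k + (N + 1) ↔ k = 1 := by
      constructor
      · rintro ⟨c, hc⟩
        have hc1 : c = 1 := by
          rcases c with _ | _ | c
          · omega
          · rfl
          · nlinarith
        subst hc1
        omega
      · rintro rfl
        exact ⟨1, by omega⟩
    simp only [d1, d2, d3, if_false, zero_mul, add_zero]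
    rcases k with _ | _ | k
    · simp [herglotzCoeff]
    · simp [herglotzCoeff]
      ring
    · simp
  rw [Finset.sum_congr rfl hk, Finset.sum_add_distrib, Finset.sum_ite_eq', Finset.sum_ite_eq',
    if_pos (by simp), if_pos (by simp; omega)]
  ring

lemma re_block_nonneg {H K : Type*} [NormedAddCommGroup H] [InnerProductSpace ℂ H]
    [CompleteSpace H] [NormedAddCommGroup K] [InnerProductSpace ℂ K] [CompleteSpace K]
    (A : Subalgebra ℂ (H →L[ℂ] H)) (B : Subalgebra ℂ (K →L[ℂ] K)) (T : A →ₗ[ℂ] B)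
    (hT : ∀ a : A, ((a : H →L[ℂ] H) + adjoint (a : H →L[ℂ] H)).IsPositive →
      ((T a : K →L[ℂ] K) + adjoint (T a : K →L[ℂ] K)).IsPositive)
    (a : A) (ha : ‖(a : H →L[ℂ] H)‖ < 1) (x y : K) :
    0 ≤ (inner ℂ x ((T 1 : K →L[ℂ] K) x) + inner ℂ y ((T 1 : K →L[ℂ] K) y)
      + 2 * inner ℂ y ((T a : K →L[ℂ] K) x)).re := by
  obtain ⟨N, hN1, hN⟩ : ∃ N : ℕ, 1 ≤ N ∧
      4 * ‖(a : H →L[ℂ] H)‖ ^ (N + 1) ≤ 1 - ‖(a : H →L[ℂ] H)‖ ^ 2 := by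
    set r := ‖(a : H →L[ℂ] H)‖ with hr
    have hr0 : 0 ≤ r := norm_nonneg _
    have hpos : 0 < (1 - r ^ 2) / 4 := by nlinarith
    obtain ⟨n, hn⟩ := exists_pow_lt_of_lt_one hpos ha
    refine ⟨n + 1, by omega, ?_⟩
    have : r ^ (n + 1 + 1) ≤ r ^ n := pow_le_pow_of_le_one hr0 ha.le (by omega)
    linarith
  have hζ := Complex.isPrimitiveRoot_exp (N + 2) (by omega)
  set ζ := Complex.exp (2 * Real.pi * Complex.I / ((N + 2 : ℕ) : ℂ)) with hζdef
  have hone : ∀ j, ‖ζ ^ j‖ = 1 := fun j => by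
    rw [norm_pow, hζ.norm'_eq_one (by omega), one_pow]
  have hsum := sum_roots_inner (fun k => (T (a ^ k) : K →L[ℂ] K)) N hN1 hζ x y
  have hnn : ∀ j v, 0 ≤ (inner ℂ v ((∑ k ∈ Finset.range (N + 1),
      (herglotzCoeff k * (ζ ^ j) ^ k) • (T (a ^ k) : K →L[ℂ] K)) v)).re := by
    intro j
    have h1 := hT (∑ k ∈ Finset.range (N + 1), (herglotzCoeff k * (ζ ^ j) ^ k) • a ^ k) (by
      rw [re_inner_nonneg_iff]
      have hn : ‖(ζ ^ j) • (a : H →L[ℂ] H)‖ = ‖(a : H →L[ℂ] H)‖ := by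
        rw [norm_smul, hone, one_mul]
      have := herglotz_accretive ((ζ ^ j) • (a : H →L[ℂ] H)) (by rwa [hn]) N (by rwa [hn])
      simpa only [smul_pow, smul_smul, AddSubmonoidClass.coe_finsetSum, SetLike.val_smul,
        SubmonoidClass.coe_pow] using this)
    rw [re_inner_nonneg_iff] at h1
    simpa only [map_sum, map_smul, AddSubmonoidClass.coe_finsetSum, SetLike.val_smul] using h1
  have hge : 0 ≤ (((N + 2 : ℕ) : ℂ) * (inner ℂ x ((T 1 : K →L[ℂ] K) x)
      + inner ℂ y ((T 1 : K →L[ℂ] K) y) + 2 * inner ℂ y ((T a : K →L[ℂ] K) x))).re := by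
    simp only [pow_zero, pow_one] at hsum
    rw [← hsum, Complex.re_sum]
    exact Finset.sum_nonneg fun j _ => hnn j _
  rw [← Complex.ofReal_natCast, Complex.re_ofReal_mul] at hge
  exact nonneg_of_mul_nonneg_right hge (by positivity)

/-- The norm estimate extracted from the positivity of the `2 × 2` operator matrix with diagonal
entries `P` and off-diagonal entries `S`, `S*`. -/
lemma norm_le_of_block {K : Type*} [NormedAddCommGroup K] [InnerProductSpace ℂ K]
    (P S : K →L[ℂ] K)
    (h : ∀ x y, 0 ≤ (inner ℂ x (P x) + inner ℂ y (P y) + 2 * inner ℂ y (S x)).re) :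
    ‖S‖ ≤ ‖P‖ := by
  have hP : ∀ x, (inner ℂ x (P x)).re ≤ ‖P‖ * ‖x‖ ^ 2 := fun x => by
    refine (Complex.re_le_norm _).trans ((norm_inner_le_norm _ _).trans ?_)
    nlinarith [P.le_opNorm x, norm_nonneg x]
  refine S.opNorm_le_bound (norm_nonneg _) fun x => ?_
  rcases eq_or_ne (S x) 0 with h0 | h0
  · rw [h0, norm_zero]
    positivity
  have hx : 0 < ‖x‖ := norm_pos_iff.2 fun hx => h0 (by rw [hx, map_zero])
  have hs : 0 < ‖S x‖ := norm_pos_iff.2 h0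
  set t : ℝ := ‖x‖ / ‖S x‖ with ht
  have htpos : 0 < t := div_pos hx hs
  have hts : t * ‖S x‖ = ‖x‖ := div_mul_cancel₀ _ hs.ne'
  have h1 := h x (((-t : ℝ) : ℂ) • S x)
  have hy : ‖((-t : ℝ) : ℂ) • S x‖ = ‖x‖ := by
    rw [norm_smul, Complex.norm_real, norm_neg, Real.norm_of_nonneg htpos.le, hts]
  have h2 := hP (((-t : ℝ) : ℂ) • S x)
  rw [hy] at h2
  have hin : (2 * inner ℂ (((-t : ℝ) : ℂ) • S x) (S x)).re = -(2 * (‖x‖ * ‖S x‖)) := by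
    have e : (inner ℂ (S x) (S x)).re = ‖S x‖ ^ 2 := inner_self_eq_norm_sq (𝕜 := ℂ) (S x)
    rw [inner_smul_left, Complex.conj_ofReal, ← Complex.ofReal_ofNat, Complex.re_ofReal_mul,
      Complex.re_ofReal_mul, e, ← hts]
    ring
  rw [Complex.add_re, Complex.add_re, hin] at h1
  have h3 : ‖x‖ * ‖S x‖ ≤ ‖x‖ * (‖P‖ * ‖x‖) := by nlinarith [hP x]
  exact le_of_mul_le_mul_left h3 hx

/-- A real positive linear map `T` between unital operator algebras satisfies
`‖T a‖ ≤ ‖T 1‖ ‖a‖`; in particular `T` is bounded with operator norm `‖T‖ = ‖T 1‖`. -/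
theorem stmt_3 {H K : Type*} [NormedAddCommGroup H] [InnerProductSpace ℂ H] [CompleteSpace H]
    [NormedAddCommGroup K] [InnerProductSpace ℂ K] [CompleteSpace K] [Nontrivial H]
    (A : Subalgebra ℂ (H →L[ℂ] H)) (hA : IsClosed (A : Set (H →L[ℂ] H)))
    (B : Subalgebra ℂ (K →L[ℂ] K)) (hB : IsClosed (B : Set (K →L[ℂ] K)))
    (T : A →ₗ[ℂ] B)
    (hT : ∀ a : A, ((a : H →L[ℂ] H) + adjoint (a : H →L[ℂ] H)).IsPositive →
      ((T a : K →L[ℂ] K) + adjoint (T a : K →L[ℂ] K)).IsPositive) :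
    (∀ a : A, ‖(T a : K →L[ℂ] K)‖ ≤ ‖(T 1 : K →L[ℂ] K)‖ * ‖(a : H →L[ℂ] H)‖) ∧
      ∀ c : ℝ, (∀ a : A, ‖(T a : K →L[ℂ] K)‖ ≤ c * ‖(a : H →L[ℂ] H)‖) →
        ‖(T 1 : K →L[ℂ] K)‖ ≤ c := by
  refine ⟨fun a => ?_, fun c hc => ?_⟩
  · have hscale : ∀ t : ℝ, ‖(a : H →L[ℂ] H)‖ < t →
        ‖(T a : K →L[ℂ] K)‖ ≤ ‖(T 1 : K →L[ℂ] K)‖ * t := by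
      intro t ht
      have ht0 : 0 < t := (norm_nonneg _).trans_lt ht
      have hn : ‖((t⁻¹ : ℝ) : ℂ)‖ = t⁻¹ := by
        rw [Complex.norm_real, Real.norm_of_nonneg (inv_nonneg.2 ht0.le)]
      have hlt : ‖((((t⁻¹ : ℝ) : ℂ) • a : A) : H →L[ℂ] H)‖ < 1 := by
        rw [SetLike.val_smul, norm_smul, hn, inv_mul_lt_iff₀ ht0, mul_one]
        exact ht
      have hle := norm_le_of_block _ _ (re_block_nonneg A B T hT _ hlt)
      rw [map_smul, SetLike.val_smul, norm_smul, hn, inv_mul_le_iff₀ ht0] at hle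
      rwa [mul_comm]
    refine ge_of_tendsto (x := nhdsWithin ‖(a : H →L[ℂ] H)‖ (Set.Ioi _)) ?_
      (Filter.eventually_of_mem self_mem_nhdsWithin hscale)
    exact ((continuous_const.mul continuous_id).tendsto _).mono_left nhdsWithin_le_nhds
  · have h1 := hc 1
    rwa [OneMemClass.coe_one, norm_one, mul_one] at h1
end

section
/- Let A be a norm-closed linear subspace of B(K) containing the identity operator 1 (a unital operator space), and let T : A → B(H) be a linear map with T(1) = 1 and ‖T(a)‖ ≤ ‖a‖ for all a ∈ A. Suppose e ∈ A is an orthogonal projection (e = e* = e²) such that (e·a + a·e)/2 ∈ A for every a ∈ A (so also e·a·e ∈ A for every a ∈ A, since eae = 2·e∘(e∘a) − e∘a), and suppose q := T(e) is an orthogonal projection in B(H). Then for all a ∈ A: T(e·a·e) = q·T(a)·q, and T((e·a + a·e)/2) = (q·T(a) + T(a)·q)/2. -/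
set_option maxHeartbeats 1000000
set_option synthInstance.maxHeartbeats 1000000

open ContinuousLinearMap

/-!
Write `f = 1 - e` and `p = 1 - q = T f`, and split `a` into its Peirce components
`e a e`, `x = e a f + f a e` and `f a f`, all of which lie in `A`.

* A diagonal component is mapped into the corresponding corner (`map_corner`). If `b = e b e` and
  `s = ‖b‖`, then `‖s f ± b‖ ≤ s`, hence `‖s p ± T b‖ ≤ s`; the parallelogram law on vectors of
  `p H` forces `T b` to vanish there. The same applied to adjoints gives `p (T b) = 0`.
* The off-diagonal component is mapped to an off-diagonal operator (`map_offdiag`). The estimate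
  `‖s e + x‖² ≤ s² + 2 ‖x‖²` passes to `s q + T x`; expanding the square on a vector `h` of `q H`
  and letting `s → ∞` gives `re ⟪h, T x h⟫ ≤ 0`. Replacing `x` by its scalar multiples gives
  `⟪h, T x h⟫ = 0`, and polarization gives `q (T x) q = 0`.

Both statements are used for `e` and for `f`; comparing Peirce components yields the theorem.
-/

section Projection

variable {K : Type*} [NormedAddCommGroup K] [InnerProductSpace ℂ K] [CompleteSpace K]

lemma adjoint_one_sub_proj {e : K →L[ℂ] K} (hs : adjoint e = e) : adjoint (1 - e) = 1 - e := by
  rw [map_sub, hs]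
  congr 1
  exact star_one (K →L[ℂ] K)

lemma idem_one_sub_proj {e : K →L[ℂ] K} (hi : e * e = e) : (1 - e) * (1 - e) = 1 - e := by
  simp [mul_sub, sub_mul, hi]

lemma inner_proj_compl {e : K →L[ℂ] K} (hs : adjoint e = e) (hi : e * e = e) (x y : K) :
    inner ℂ (e x) ((1 - e) y) = 0 := by
  have h : e ((1 - e) y) = 0 := by
    change (e * (1 - e)) y = 0
    simp [mul_sub, hi]
  have h2 := ContinuousLinearMap.adjoint_inner_left e ((1 - e) y) x
  rw [hs] at h2
  rw [h2, h, inner_zero_right]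

/-- Pythagoras for vectors in the ranges of `e` and `1 - e`. -/
lemma norm_sq_proj_add {e : K →L[ℂ] K} (hs : adjoint e = e) (hi : e * e = e) (x y : K) :
    ‖e x + (1 - e) y‖ ^ 2 = ‖e x‖ ^ 2 + ‖(1 - e) y‖ ^ 2 := by
  have h := norm_add_sq_eq_norm_sq_add_norm_sq_of_inner_eq_zero (𝕜 := ℂ) (e x) ((1 - e) y)
    (inner_proj_compl hs hi x y)
  nlinarith [h]

lemma norm_sq_proj {e : K →L[ℂ] K} (hs : adjoint e = e) (hi : e * e = e) (x : K) :
    ‖x‖ ^ 2 = ‖e x‖ ^ 2 + ‖(1 - e) x‖ ^ 2 := by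
  rw [← norm_sq_proj_add hs hi]
  simp

/-- An element of the corner `e B(K) e` is orthogonal to `1 - e`, so their combination has the
maximum of the two norms. -/
lemma norm_compl_add_corner_le {e b : K →L[ℂ] K} (hs : adjoint e = e) (hi : e * e = e)
    (heb : e * b = b) (hbe : b * e = b) :
    ‖(‖b‖ : ℂ) • (1 - e) + b‖ ≤ ‖b‖ := by
  refine opNorm_le_bound _ (norm_nonneg _) fun k => ?_
  refine le_of_sq_le_sq ?_ (by positivity)
  have h1 : ((‖b‖ : ℂ) • (1 - e) + b) k = e (b (e k)) + (1 - e) ((‖b‖ : ℂ) • k) := by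
    have : e (b (e k)) = b k := by
      change (e * (b * e)) k = b k
      rw [hbe, heb]
    rw [this]
    simp [add_comm, smul_sub]
  have h2 : e (b (e k)) = b (e k) := by
    change (e * b) (e k) = b (e k)
    rw [heb]
  have h3 : ‖b (e k)‖ ≤ ‖b‖ * ‖e k‖ := le_opNorm _ _
  rw [h1, norm_sq_proj_add hs hi, h2, map_smul, norm_smul, mul_pow ‖b‖ ‖k‖, norm_sq_proj hs hi k]
  have h4 : ‖b (e k)‖ ^ 2 ≤ (‖b‖ * ‖e k‖) ^ 2 := by gcongr
  simp only [Complex.norm_real, norm_norm]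
  nlinarith

/-- An operator `c` with `‖s p ± c‖ ≤ s` vanishes on the range of the projection `p`. -/
lemma mul_proj_eq_zero {p c : K →L[ℂ] K} {s : ℝ} (hi : p * p = p)
    (h1 : ‖(s : ℂ) • p + c‖ ≤ s) (h2 : ‖(s : ℂ) • p - c‖ ≤ s) : c * p = 0 := by
  ext k
  have hp : p (p k) = p k := by
    change (p * p) k = p k
    rw [hi]
  have hs : 0 ≤ s := (norm_nonneg _).trans h1
  have e1 : ‖(s : ℂ) • p k + c (p k)‖ ≤ s * ‖p k‖ := by
    have := le_of_opNorm_le _ h1 (p k)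
    simpa [hp] using this
  have e2 : ‖(s : ℂ) • p k - c (p k)‖ ≤ s * ‖p k‖ := by
    have := le_of_opNorm_le _ h2 (p k)
    simpa [hp] using this
  have e3 := parallelogram_law_with_norm ℂ ((s : ℂ) • p k) (c (p k))
  have e4 : ‖(s : ℂ) • p k‖ = s * ‖p k‖ := by
    rw [norm_smul, Complex.norm_real, Real.norm_of_nonneg hs]
  rw [e4] at e3
  have e5 := mul_self_le_mul_self (norm_nonneg _) e1
  have e6 := mul_self_le_mul_self (norm_nonneg _) e2
  have e7 : ‖c (p k)‖ = 0 := by nlinarith [norm_nonneg (c (p k))]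
  simpa using e7

/-- Off-diagonal perturbations of `s e` change the norm only to second order. -/
lemma norm_sq_proj_add_offdiag_le {e x : K →L[ℂ] K} (hs : adjoint e = e) (hi : e * e = e)
    (h1 : e * x * e = 0) (h2 : (1 - e) * x * (1 - e) = 0) (s : ℝ) (k : K) :
    ‖((s : ℂ) • e + x) k‖ ^ 2 ≤ (s ^ 2 + 2 * ‖x‖ ^ 2) * ‖k‖ ^ 2 := by
  have hk := norm_sq_proj hs hi k
  have hid : ((s : ℂ) • e + x) k
      = e ((s : ℂ) • k + x ((1 - e) k)) + (1 - e) (x (e k)) := by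
    have hx : x = e * x * (1 - e) + (1 - e) * x * e := by
      have : x = e * x * e + (1 - e) * x * (1 - e) + (e * x * (1 - e) + (1 - e) * x * e) := by
        noncomm_ring
      rw [h1, h2] at this
      simpa using this
    have hxk := congrArg (fun y : K →L[ℂ] K => y k) hx
    have hxk' : x k = e (x ((1 - e) k)) + (1 - e) (x (e k)) := hxk
    rw [add_apply, smul_apply, hxk', map_add, map_smul]
    abel
  rw [hid, norm_sq_proj_add hs hi]
  have b0 : ∀ y, ‖e y‖ ≤ ‖y‖ := fun y =>
    le_of_sq_le_sq (by nlinarith [norm_sq_proj hs hi y, sq_nonneg ‖(1 - e) y‖]) (norm_nonneg _)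
  have b0' : ∀ y, ‖(1 - e) y‖ ≤ ‖y‖ := fun y =>
    le_of_sq_le_sq (by nlinarith [norm_sq_proj hs hi y, sq_nonneg ‖e y‖]) (norm_nonneg _)
  have b1 : ‖e ((s : ℂ) • k + x ((1 - e) k))‖ ≤ |s| * ‖e k‖ + ‖x‖ * ‖(1 - e) k‖ := by
    rw [map_add, map_smul]
    refine (norm_add_le _ _).trans (add_le_add ?_ ((b0 _).trans (le_opNorm _ _)))
    rw [norm_smul, Complex.norm_real, Real.norm_eq_abs]
  have b2 : ‖(1 - e) (x (e k))‖ ≤ ‖x‖ * ‖e k‖ := (b0' _).trans (le_opNorm _ _)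
  have b3 := pow_le_pow_left₀ (norm_nonneg _) b1 2
  have b4 := pow_le_pow_left₀ (norm_nonneg _) b2 2
  have b5 := sq_abs s
  -- Cauchy–Schwarz for the pairs `(|s|, ‖x‖)` and `(‖e k‖, ‖(1 - e) k‖)`
  have b6 := sq_nonneg (|s| * ‖(1 - e) k‖ - ‖x‖ * ‖e k‖)
  rw [hk, ← b5]
  nlinarith [sq_nonneg (‖x‖ * ‖(1 - e) k‖)]

/-- If `‖s q + c‖² ≤ s² + C` for all real `s`, then the real part of the quadratic form of `c` is
nonpositive on the range of `q`: the cross term grows linearly in `s`. -/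
lemma re_inner_nonpos {q c : K →L[ℂ] K} {C : ℝ} (hi : q * q = q)
    (h : ∀ s : ℝ, ∀ k, ‖((s : ℂ) • q + c) k‖ ^ 2 ≤ (s ^ 2 + C) * ‖k‖ ^ 2) (k : K) :
    (inner ℂ (q k) (c (q k))).re ≤ 0 := by
  by_contra! hpos
  have hq : q (q k) = q k := by
    change (q * q) k = q k
    rw [hi]
  set r := (inner ℂ (q k) (c (q k))).re with hr
  have key : ∀ s : ℝ, 2 * s * r ≤ C * ‖q k‖ ^ 2 := by
    intro s
    have h1 := h s (q k)
    rw [add_apply, smul_apply, hq, norm_add_sq (𝕜 := ℂ), norm_smul, Complex.norm_real,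
      inner_smul_left] at h1
    have h2 : RCLike.re ((starRingEnd ℂ) (s : ℂ) * inner ℂ (q k) (c (q k))) = s * r := by
      simp [hr]
    rw [h2, mul_pow, Real.norm_eq_abs, sq_abs] at h1
    nlinarith [sq_nonneg ‖c (q k)‖]
  have h1 := key ((C * ‖q k‖ ^ 2 + 1) / (2 * r))
  have h2 : 2 * ((C * ‖q k‖ ^ 2 + 1) / (2 * r)) * r = C * ‖q k‖ ^ 2 + 1 := by
    field_simp
  linarith

end Projection

section Map

variable {K H : Type*} [NormedAddCommGroup K] [InnerProductSpace ℂ K] [CompleteSpace K]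
    [NormedAddCommGroup H] [InnerProductSpace ℂ H] [CompleteSpace H]

lemma map_corner_aux {A : Submodule ℂ (K →L[ℂ] K)} (T : A →ₗ[ℂ] (H →L[ℂ] H))
    (hTc : ∀ a : A, ‖T a‖ ≤ ‖(a : K →L[ℂ] K)‖)
    {e f : A} (hf : (f : K →L[ℂ] K) = 1 - e)
    (hs : adjoint (e : K →L[ℂ] K) = e) (hi : (e : K →L[ℂ] K) * e = e)
    (b : A) (heb : (e : K →L[ℂ] K) * b = b) (hbe : (b : K →L[ℂ] K) * e = b) :
    ‖((‖(b : K →L[ℂ] K)‖ : ℝ) : ℂ) • T f + T b‖ ≤ ‖(b : K →L[ℂ] K)‖ := by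
  have h := hTc (((‖(b : K →L[ℂ] K)‖ : ℝ) : ℂ) • f + b)
  rw [map_add, map_smul] at h
  refine h.trans ?_
  rw [Submodule.coe_add, Submodule.coe_smul, hf]
  exact norm_compl_add_corner_le hs hi heb hbe

/-- A contraction taking `1 - e` to a projection `p` maps the corner of `e` to the corner of
`1 - p`. -/
lemma map_corner {A : Submodule ℂ (K →L[ℂ] K)} (T : A →ₗ[ℂ] (H →L[ℂ] H))
    (hTc : ∀ a : A, ‖T a‖ ≤ ‖(a : K →L[ℂ] K)‖)
    {e f : A} (hf : (f : K →L[ℂ] K) = 1 - e)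
    (hs : adjoint (e : K →L[ℂ] K) = e) (hi : (e : K →L[ℂ] K) * e = e)
    (hps : adjoint (T f) = T f) (hpi : T f * T f = T f)
    (b : A) (heb : (e : K →L[ℂ] K) * b = b) (hbe : (b : K →L[ℂ] K) * e = b) :
    T b * T f = 0 ∧ T f * T b = 0 := by
  have h1 := map_corner_aux T hTc hf hs hi b heb hbe
  have h2 := map_corner_aux T hTc hf hs hi (-b) (by simp [heb]) (by simp [hbe])
  rw [map_neg, ← sub_eq_add_neg, Submodule.coe_neg, norm_neg] at h2
  refine ⟨mul_proj_eq_zero hpi h1 h2, ?_⟩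
  have hstar : star (T f) = T f := hps
  have h3 : star (T b) * T f = 0 := by
    refine mul_proj_eq_zero (s := ‖(b : K →L[ℂ] K)‖) hpi ?_ ?_
    · rw [← norm_star]
      simpa [hstar] using h1
    · rw [← norm_star]
      simpa [hstar] using h2
  have h4 := congrArg star h3
  simpa [hstar] using h4

lemma re_inner_map_offdiag {A : Submodule ℂ (K →L[ℂ] K)} (T : A →ₗ[ℂ] (H →L[ℂ] H))
    (hTc : ∀ a : A, ‖T a‖ ≤ ‖(a : K →L[ℂ] K)‖)
    {e : A} (hs : adjoint (e : K →L[ℂ] K) = e) (hi : (e : K →L[ℂ] K) * e = e)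
    (hqi : T e * T e = T e) (x : A) (h1 : (e : K →L[ℂ] K) * x * e = 0)
    (h2 : (1 - (e : K →L[ℂ] K)) * x * (1 - (e : K →L[ℂ] K)) = 0) (k : H) :
    (inner ℂ (T e k) (T x (T e k))).re ≤ 0 := by
  refine re_inner_nonpos (C := 2 * ‖(x : K →L[ℂ] K)‖ ^ 2) hqi (fun s k => ?_) k
  have hC : 0 ≤ s ^ 2 + 2 * ‖(x : K →L[ℂ] K)‖ ^ 2 := by positivity
  have hn : ‖((s : ℂ) • (e : K →L[ℂ] K) + x)‖ ≤ √(s ^ 2 + 2 * ‖(x : K →L[ℂ] K)‖ ^ 2) := by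
    refine opNorm_le_bound _ (Real.sqrt_nonneg _) fun k => ?_
    refine le_of_sq_le_sq ?_ (by positivity)
    rw [mul_pow, Real.sq_sqrt hC]
    exact norm_sq_proj_add_offdiag_le hs hi h1 h2 s k
  have hT := hTc ((s : ℂ) • e + x)
  rw [map_add, map_smul] at hT
  have h3 := le_of_opNorm_le _ (hT.trans hn) k
  have h4 := pow_le_pow_left₀ (norm_nonneg _) h3 2
  rwa [mul_pow, Real.sq_sqrt hC] at h4

/-- A contraction taking the projection `e` to a projection `q` maps operators that are
off-diagonal for `e` to operators whose `q`-corner vanishes. -/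
lemma map_offdiag {A : Submodule ℂ (K →L[ℂ] K)} (T : A →ₗ[ℂ] (H →L[ℂ] H))
    (hTc : ∀ a : A, ‖T a‖ ≤ ‖(a : K →L[ℂ] K)‖)
    {e : A} (hs : adjoint (e : K →L[ℂ] K) = e) (hi : (e : K →L[ℂ] K) * e = e)
    (hqs : adjoint (T e) = T e) (hqi : T e * T e = T e)
    (x : A) (h1 : (e : K →L[ℂ] K) * x * e = 0)
    (h2 : (1 - (e : K →L[ℂ] K)) * x * (1 - (e : K →L[ℂ] K)) = 0) :
    T e * T x * T e = 0 := by
  have hre : ∀ (z : ℂ) (k : H), (z * inner ℂ (T e k) (T x (T e k))).re ≤ 0 := by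
    intro z k
    have := re_inner_map_offdiag T hTc hs hi hqi (z • x) (by simp [h1]) (by simp [h2]) k
    rwa [map_smul, smul_apply, inner_smul_right] at this
  have hz : ∀ k : H, inner ℂ (T e k) (T x (T e k)) = 0 := by
    intro k
    have a1 := hre 1 k
    have a2 := hre (-1) k
    have a3 := hre Complex.I k
    have a4 := hre (-Complex.I) k
    simp at a1 a2 a3 a4
    exact Complex.ext (le_antisymm a1 a2) (le_antisymm a4 a3)
  have hq : ∀ u v : H, inner ℂ (T e u) v = inner ℂ u (T e v) := fun u v => by
    conv_lhs => rw [← hqs]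
    exact adjoint_inner_left _ _ _
  have h0 : ((T e * T x * T e : H →L[ℂ] H) : H →ₗ[ℂ] H) = 0 := by
    rw [← inner_map_self_eq_zero]
    intro k
    have hk := hz k
    rw [hq] at hk
    rw [← inner_conj_symm]
    change (starRingEnd ℂ) (inner ℂ k (T e (T x (T e k)))) = 0
    rw [hk, map_zero]
  exact ContinuousLinearMap.coe_injective h0

end Map

/-- Let `A` be a unital operator space, `T : A → B(H)` a unital contraction, `e ∈ A` an
orthogonal projection with `e ∘ A ⊆ A`, such that `q = T e` is an orthogonal projection.
Then `T (e a e) = q (T a) q` and `T (e ∘ a) = q ∘ T a` for all `a ∈ A`. -/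
theorem stmt_7 {K H : Type*} [NormedAddCommGroup K] [InnerProductSpace ℂ K] [CompleteSpace K]
    [NormedAddCommGroup H] [InnerProductSpace ℂ H] [CompleteSpace H]
    (A : Submodule ℂ (K →L[ℂ] K)) (hA : IsClosed (A : Set (K →L[ℂ] K)))
    (h1 : (1 : K →L[ℂ] K) ∈ A)
    (T : A →ₗ[ℂ] (H →L[ℂ] H)) (hT1 : T ⟨1, h1⟩ = 1)
    (hTc : ∀ a : A, ‖T a‖ ≤ ‖(a : K →L[ℂ] K)‖)
    (e : K →L[ℂ] K) (he : e ∈ A) (heSA : adjoint e = e) (heIdem : e * e = e)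
    (hJ : ∀ a ∈ A, (2 : ℂ)⁻¹ • (e * a + a * e) ∈ A)
    (hqSA : adjoint (T ⟨e, he⟩) = T ⟨e, he⟩)
    (hqIdem : T ⟨e, he⟩ * T ⟨e, he⟩ = T ⟨e, he⟩) :
    ∀ a, ∀ ha : a ∈ A, ∀ hea : e * a * e ∈ A, ∀ hja : (2 : ℂ)⁻¹ • (e * a + a * e) ∈ A,
      T ⟨e * a * e, hea⟩ = T ⟨e, he⟩ * T ⟨a, ha⟩ * T ⟨e, he⟩ ∧
      T ⟨(2 : ℂ)⁻¹ • (e * a + a * e), hja⟩ =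
        (2 : ℂ)⁻¹ • (T ⟨e, he⟩ * T ⟨a, ha⟩ + T ⟨a, ha⟩ * T ⟨e, he⟩) := by
  intro a ha hea hja
  set f : K →L[ℂ] K := 1 - e with hf
  have hfA : f ∈ A := A.sub_mem h1 he
  have hfs : adjoint f = f := adjoint_one_sub_proj heSA
  have hfi : f * f = f := idem_one_sub_proj heIdem
  have hef : e = 1 - f := by rw [hf]; abel
  set q := T ⟨e, he⟩ with hq
  have hTf : T ⟨f, hfA⟩ = 1 - q := by
    rw [← hT1, hq, ← map_sub]
    rfl
  have hps : adjoint (T ⟨f, hfA⟩) = T ⟨f, hfA⟩ := by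
    rw [hTf]
    exact adjoint_one_sub_proj hqSA
  have hpi : T ⟨f, hfA⟩ * T ⟨f, hfA⟩ = T ⟨f, hfA⟩ := by
    rw [hTf]
    exact idem_one_sub_proj hqIdem
  -- The Peirce components of `a`, expressed through `a`, `e ∘ a` and `e a e`.
  let J : A := ⟨(2 : ℂ)⁻¹ • (e * a + a * e), hja⟩
  let b : A := ⟨e * a * e, hea⟩
  let x : A := (2 : ℂ) • (J - b)
  let d : A := ⟨a, ha⟩ - b - x
  have hx : (x : K →L[ℂ] K) = e * a * f + f * a * e := by
    change (2 : ℂ) • ((2 : ℂ)⁻¹ • (e * a + a * e) - e * a * e) = _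
    rw [smul_sub, smul_smul, mul_inv_cancel₀ two_ne_zero, one_smul, two_smul, hf]
    noncomm_ring
  have hd : (d : K →L[ℂ] K) = f * a * f := by
    change a - e * a * e - (x : K →L[ℂ] K) = _
    rw [hx, hf]
    noncomm_ring
  have hefz : e * f = 0 := by rw [hf, mul_sub, heIdem, mul_one, sub_self]
  have hfez : f * e = 0 := by rw [hf, sub_mul, heIdem, one_mul, sub_self]
  have hexe : e * (x : K →L[ℂ] K) * e = 0 := by
    rw [hx, mul_add, add_mul, mul_assoc e a f, mul_assoc e (e * (a * f)) e, mul_assoc e (a * f) e,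
      mul_assoc a f e, hfez, mul_assoc f a e, ← mul_assoc e f, hefz]
    simp
  have hfxf : f * (x : K →L[ℂ] K) * f = 0 := by
    rw [hx, mul_add, add_mul, mul_assoc e a f, ← mul_assoc f e, hfez, mul_assoc f (f * a * e) f,
      mul_assoc (f * a) e f, hefz]
    simp
  obtain ⟨b1, b2⟩ := map_corner T hTc (e := ⟨e, he⟩) (f := ⟨f, hfA⟩) hf heSA heIdem hps hpi b
    (by change e * (e * a * e) = e * a * e; rw [← mul_assoc, ← mul_assoc, heIdem])
    (by change e * a * e * e = e * a * e; rw [mul_assoc, heIdem])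
  obtain ⟨d1, d2⟩ := map_corner T hTc (e := ⟨f, hfA⟩) (f := ⟨e, he⟩) hef hfs hfi hqSA hqIdem d
    (by rw [hd]; change f * (f * a * f) = f * a * f; rw [← mul_assoc, ← mul_assoc, hfi])
    (by rw [hd]; change f * a * f * f = f * a * f; rw [mul_assoc, hfi])
  have x1 := map_offdiag T hTc (e := ⟨e, he⟩) heSA heIdem hqSA hqIdem x hexe hfxf
  have x2 := map_offdiag T hTc (e := ⟨f, hfA⟩) hfs hfi hps hpi x hfxf
    (by change (1 - f) * (x : K →L[ℂ] K) * (1 - f) = 0; rw [← hef]; exact hexe)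
  rw [← hq] at d1 d2 x1
  rw [hTf] at b1 b2 x2
  have hTa : T ⟨a, ha⟩ = T b + T x + T d := by
    rw [← map_add, ← map_add]
    congr 1
    change _ = b + x + (⟨a, ha⟩ - b - x)
    abel
  have hTJ : T J = T b + (2 : ℂ)⁻¹ • T x := by
    rw [← map_smul, ← map_add]
    congr 1
    change J = b + (2 : ℂ)⁻¹ • ((2 : ℂ) • (J - b))
    rw [smul_smul, inv_mul_cancel₀ two_ne_zero, one_smul]
    abel
  have b3 : T b * q = T b := by
    rw [mul_sub, mul_one, sub_eq_zero] at b1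
    exact b1.symm
  have b4 : q * T b = T b := by
    rw [sub_mul, one_mul, sub_eq_zero] at b2
    exact b2.symm
  have x3 : q * T x + T x * q = T x := by
    have : (1 - q) * T x * (1 - q) = T x - (q * T x + T x * q) + q * T x * q := by noncomm_ring
    rw [x2, x1, add_zero] at this
    exact (sub_eq_zero.mp this.symm).symm
  constructor
  · change T b = _
    rw [hTa, mul_add, mul_add, add_mul, add_mul, b4, b3, x1, d2]
    simp
  · change T J = _
    have h : q * (T b + T x + T d) + (T b + T x + T d) * q
        = (2 : ℂ) • T b + T x := by
      calc _ = q * T b + T b * q + (q * T x + T x * q) + (q * T d + T d * q) := by noncomm_ring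
        _ = _ := by rw [b3, b4, x3, d1, d2, two_smul]; abel
    rw [hTJ, hTa, h, smul_add, smul_smul, inv_mul_cancel₀ two_ne_zero, one_smul]
end

section
/- Let A ⊆ B(H) and B ⊆ B(K) be unital operator algebras and let T : A → B be a surjective linear isometry with T(1) = 1. Then T is a Jordan homomorphism: T(a·b + b·a) = T(a)·T(b) + T(b)·T(a) for all a, b ∈ A. -/
set_option maxHeartbeats 1000000
set_option synthInstance.maxHeartbeats 1000000

/-!
The proof is Cartan's uniqueness theorem applied to Möbius maps of the unit ball.

For `s = ±1/2` the Möbius map `x ↦ (x + s)(1 + s x)⁻¹` sends the open unit ball of a closed unital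
operator algebra into itself (`norm_mobius_lt_one`). Conjugating by `T` gives a holomorphic self-map
`Φ = T⁻¹ ∘ mobius (-1/2) ∘ T ∘ mobius (1/2)` of the unit ball of `A`, and since `T 1 = 1` it fixes
`0` and is tangent to the identity there. Up to affine rescaling the Möbius map is
`y ↦ y (1 + s y)⁻¹ = y - s y² + ⋯`, so `Φ x = x + (1/2) • d x + ⋯` with
`d x = T⁻¹ ((T x)²) - x²`.

The `n`-th iterate of `Φ` is then `x + (n/2) • d x + ⋯`. It still maps the ball to itself, so
Cauchy's estimate on the disc `z ↦ z • x` bounds `(n/2) • d x` independently of `n`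
(`HasJet.norm_le`). Hence `d x = 0`, that is `T (x²) = (T x)²`, and polarization finishes.
-/

open Filter Topology

/-- The Möbius map `x ↦ (x + s)(1 + s x)⁻¹`, for real `s` in practice. -/
noncomputable def mobius {R : Type*} [NormedRing R] [NormedAlgebra ℂ R] (s : ℂ) (x : R) : R :=
  (x + s • 1) * Ring.inverse (1 + s • x)

/-- The map `y ↦ y (1 + s y)⁻¹`, which is `mobius s` normalized to fix `0` with derivative `1`. -/
noncomputable def normMobius {R : Type*} [NormedRing R] [NormedAlgebra ℂ R] (s : ℂ) (y : R) : R :=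
  y * Ring.inverse (1 + s • y)

/-- `γ z = z • x + z ^ 2 • w + o(z ^ 2)` as `z → 0`, expressed by a limit over `z ≠ 0`. -/
def HasJet {E : Type*} [NormedAddCommGroup E] [NormedSpace ℂ E] (γ : ℂ → E) (x w : E) : Prop :=
  Tendsto (fun z : ℂ => (z ^ 2)⁻¹ • (γ z - z • x)) (𝓝[≠] 0) (𝓝 w)

/-! ### Second-order jets of curves -/

section Jet

variable {E F : Type*} [NormedAddCommGroup E] [NormedSpace ℂ E]
  [NormedAddCommGroup F] [NormedSpace ℂ F]

lemma tendsto_id_punctured : Tendsto (fun z : ℂ => z) (𝓝[≠] 0) (𝓝 0) :=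
  tendsto_id.mono_left nhdsWithin_le_nhds

lemma HasJet.tendsto_div {γ : ℂ → E} {x w : E} (h : HasJet γ x w) :
    Tendsto (fun z : ℂ => z⁻¹ • γ z) (𝓝[≠] 0) (𝓝 x) := by
  have h1 : Tendsto (fun z : ℂ => x + z • ((z ^ 2)⁻¹ • (γ z - z • x))) (𝓝[≠] 0)
      (𝓝 (x + (0 : ℂ) • w)) :=
    tendsto_const_nhds.add (tendsto_id_punctured.smul h)
  rw [zero_smul, add_zero] at h1
  refine h1.congr' ?_
  filter_upwards [self_mem_nhdsWithin] with z hz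
  have hz : z ≠ 0 := hz
  rw [smul_smul, smul_sub, smul_smul]
  have e1 : z * (z ^ 2)⁻¹ = z⁻¹ := by field_simp
  rw [e1, inv_mul_cancel₀ hz, one_smul]
  abel

lemma HasJet.tendsto_zero {γ : ℂ → E} {x w : E} (h : HasJet γ x w) :
    Tendsto γ (𝓝[≠] 0) (𝓝 0) := by
  have h1 := tendsto_id_punctured.smul h.tendsto_div
  rw [zero_smul] at h1
  refine h1.congr' ?_
  filter_upwards [self_mem_nhdsWithin] with z hz
  have hz : z ≠ 0 := hz
  rw [smul_smul, mul_inv_cancel₀ hz, one_smul]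

lemma HasJet.map {γ : ℂ → E} {x w : E} (h : HasJet γ x w) (L : E →L[ℂ] F) :
    HasJet (fun z => L (γ z)) (L x) (L w) := by
  have h1 := (L.continuous.tendsto w).comp h
  refine h1.congr fun z => ?_
  simp

lemma hasJet_line (x : E) : HasJet (fun z : ℂ => z • x) x 0 := by
  simp only [HasJet, sub_self, smul_zero]
  exact tendsto_const_nhds

lemma HasJet.normMobius {R : Type*} [NormedRing R] [NormedAlgebra ℂ R] [CompleteSpace R]
    {γ : ℂ → R} {x w : R} (h : HasJet γ x w) (s : ℂ) :
    HasJet (fun z => normMobius s (γ z)) x (w - s • (x * x)) := by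
  have hlim : Tendsto (fun z => 1 + s • γ z) (𝓝[≠] 0) (𝓝 1) := by
    simpa using (tendsto_const_nhds (x := (1 : R))).add (h.tendsto_zero.const_smul s)
  have hcont : Tendsto (fun z => Ring.inverse (1 + s • γ z)) (𝓝[≠] 0) (𝓝 1) := by
    have := NormedRing.inverse_continuousAt (1 : Rˣ)
    have h2 : Tendsto Ring.inverse (𝓝 (1 : R)) (𝓝 (1 : R)) := by
      simpa [ContinuousAt] using this
    exact h2.comp hlim
  have hunit : ∀ᶠ z in 𝓝[≠] (0 : ℂ), IsUnit (1 + s • γ z) :=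
    hlim.eventually (Units.isOpen.mem_nhds (isUnit_one))
  have main := h.sub
    (((h.tendsto_div.mul h.tendsto_div).mul hcont).const_smul s)
  rw [mul_one] at main
  refine main.congr' ?_
  filter_upwards [hunit] with z hu
  have e : _root_.normMobius s (γ z)
      = γ z - s • (γ z * γ z * Ring.inverse (1 + s • γ z)) := by
    refine hu.mul_right_cancel ?_
    rw [_root_.normMobius, sub_mul, mul_assoc, Ring.inverse_mul_cancel _ hu, smul_mul_assoc,
      mul_assoc (γ z * γ z), Ring.inverse_mul_cancel _ hu]
    simp [mul_add]
  rw [e]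
  simp only [smul_mul_assoc, mul_smul_comm, smul_sub, smul_smul]
  rw [show (z ^ 2)⁻¹ * s = s * (z⁻¹ * z⁻¹) by rw [pow_two, mul_inv]; ring]
  abel

/-- Cauchy's estimate for the second-order coefficient of a bounded holomorphic curve. -/
lemma HasJet.norm_le [CompleteSpace E] {γ : ℂ → E} {x w : E} (h : HasJet γ x w) {r : ℝ}
    (hr : 0 < r) (hd : DifferentiableOn ℂ γ (Metric.ball 0 r)) (h0 : γ 0 = 0)
    (hb : ∀ z ∈ Metric.ball (0 : ℂ) r, ‖γ z‖ < 1) :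
    ‖w‖ ≤ (r / 2)⁻¹ / (r / 2) := by
  have hmem : Metric.ball (0 : ℂ) r ∈ 𝓝 (0 : ℂ) := Metric.ball_mem_nhds _ hr
  have hval : ∀ z : ℂ, z ≠ 0 → dslope γ 0 z = z⁻¹ • γ z := fun z hz => by
    rw [dslope_of_ne _ hz, slope_def_module, h0, sub_zero, sub_zero]
  have hg : DifferentiableOn ℂ (dslope γ 0) (Metric.ball 0 r) :=
    (Complex.differentiableOn_dslope hmem).2 hd
  have hx : dslope γ 0 0 = x := by
    have c : ContinuousAt (dslope γ 0) 0 := (hg.differentiableAt hmem).continuousAt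
    have c' : Tendsto (dslope γ 0) (𝓝[≠] 0) (𝓝 (dslope γ 0 0)) :=
      c.tendsto.mono_left nhdsWithin_le_nhds
    refine tendsto_nhds_unique c' ?_
    refine h.tendsto_div.congr' ?_
    filter_upwards [self_mem_nhdsWithin] with z hz
    exact (hval z hz).symm
  have hder : HasDerivAt (dslope γ 0) w 0 := by
    rw [hasDerivAt_iff_tendsto_slope]
    refine Tendsto.congr' ?_ h
    filter_upwards [self_mem_nhdsWithin] with z hz
    have hz : z ≠ 0 := hz
    rw [slope_def_module, hval z hz, hx, sub_zero, smul_sub, smul_sub, smul_smul, smul_smul,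
      pow_two, mul_inv, mul_assoc, inv_mul_cancel₀ hz, mul_one]
  rw [← hder.deriv]
  have hr2 : 0 < r / 2 := by positivity
  refine Complex.norm_deriv_le_of_forall_mem_sphere_norm_le hr2 ?_ ?_
  · refine (hg.mono ?_).diffContOnCl
    rw [closure_ball _ hr2.ne']
    exact Metric.closedBall_subset_ball (by linarith)
  · intro z hz
    have hz' : ‖z‖ = r / 2 := by simpa using hz
    have hz0 : z ≠ 0 := by
      rw [← norm_pos_iff, hz']
      exact hr2
    rw [hval z hz0, norm_smul, norm_inv, hz']
    have := hb z (by rw [mem_ball_zero_iff, hz']; linarith)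
    exact mul_le_of_le_one_right (by positivity) this.le

end Jet

/-! ### Möbius maps on the unit ball -/

section Mobius

variable {R S : Type*} [NormedRing R] [NormedAlgebra ℂ R]
  [NormedRing S] [NormedAlgebra ℂ S]

lemma smul_normMobius {s : ℂ} {x : R} (hu : IsUnit (1 + s • x)) :
    (1 - s ^ 2) • normMobius s x = mobius s x - s • 1 := by
  refine hu.mul_right_cancel ?_
  rw [normMobius, mobius, sub_mul, smul_mul_assoc, mul_assoc, mul_assoc,
    Ring.inverse_mul_cancel _ hu]
  simp only [mul_one, smul_mul_assoc, one_mul, smul_add, sub_smul, one_smul, pow_two, mul_smul]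
  abel

/-- The composite `T⁻¹ ∘ mobius (-1/2) ∘ T ∘ mobius (1/2)`, written with the normalized maps; for unital
`T` the two agree on the unit ball. -/
noncomputable def cartanMap (T : R ≃ₗᵢ[ℂ] S) (x : R) : R :=
  T.symm (normMobius (-(1 / 2)) (T (normMobius (1 / 2) x)))

lemma cartanMap_zero (T : R ≃ₗᵢ[ℂ] S) : cartanMap T 0 = 0 := by
  simp [cartanMap, normMobius]

variable [CompleteSpace R] [CompleteSpace S]

lemma isUnit_one_add_smul {s : ℂ} (hs : ‖s‖ ≤ 1) {x : R} (hx : ‖x‖ < 1) :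
    IsUnit (1 + s • x) := by
  have := isUnit_one_sub_of_norm_lt_one (x := -(s • x)) (by
    rw [norm_neg, norm_smul]
    exact (mul_le_of_le_one_left (norm_nonneg _) hs).trans_lt hx)
  simpa using this

lemma differentiableAt_normMobius {s : ℂ} {x : R} (hu : IsUnit (1 + s • x)) :
    DifferentiableAt ℂ (normMobius s) x := by
  obtain ⟨u, hu⟩ := hu
  have h1 : DifferentiableAt ℂ (fun y : R => 1 + s • y) x := by fun_prop
  have h2 : DifferentiableAt ℂ (fun y : R => Ring.inverse (1 + s • y)) x := by
    have : DifferentiableAt ℂ (Ring.inverse : R → R) (1 + s • x) := by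
      rw [← hu]
      exact differentiableAt_inverse u.isUnit
    exact this.comp x h1
  exact differentiableAt_id.mul h2

/-- The normalizations cancel: with `p = T (mobius (1/2) x)`, the second factor acts as
`mobius (-1/2)` on `p`. This gives both the self-map property and holomorphy. -/
lemma cartanMap_spec (T : R ≃ₗᵢ[ℂ] S) (hT1 : T 1 = 1)
    (hR : ∀ x : R, ‖x‖ < 1 → ‖mobius (1 / 2) x‖ < 1)
    (hS : ∀ x : S, ‖x‖ < 1 → ‖mobius (-(1 / 2)) x‖ < 1) {x : R} (hx : ‖x‖ < 1) :
    ‖cartanMap T x‖ < 1 ∧ DifferentiableAt ℂ (cartanMap T) x := by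
  have hu : IsUnit (1 + (1 / 2 : ℂ) • x) := isUnit_one_add_smul (by norm_num) hx
  set p : S := T (mobius (1 / 2) x) with hp
  have hpn : ‖p‖ < 1 := by rw [hp, T.norm_map]; exact hR x hx
  set u : S := T (normMobius (1 / 2) x) with hudef
  have hup : u = (4 / 3 : ℂ) • (p - (1 / 2 : ℂ) • 1) := by
    have e := congrArg T (smul_normMobius hu)
    rw [map_smul, map_sub, map_smul, hT1] at e
    rw [hp, ← e, ← hudef, smul_smul]
    norm_num
  have hup1 : IsUnit (1 + (-(1 / 2) : ℂ) • p) := isUnit_one_add_smul (by norm_num) hpn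
  have hrel : 1 + (-(1 / 2) : ℂ) • u = (4 / 3 : ℂ) • (1 + (-(1 / 2) : ℂ) • p) := by
    rw [hup]
    module
  have hu2 : IsUnit (1 + (-(1 / 2) : ℂ) • u) := by
    rw [hrel]
    exact (hup1.smul (Units.mk0 (4 / 3 : ℂ) (by norm_num)))
  constructor
  · have e : normMobius (-(1 / 2)) u = mobius (-(1 / 2)) p := by
      refine hu2.mul_right_cancel ?_
      rw [normMobius, mul_assoc, Ring.inverse_mul_cancel _ hu2, hrel, mobius, mul_smul_comm,
        mul_assoc, Ring.inverse_mul_cancel _ hup1, hup]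
      simp only [mul_one]
      module
    rw [cartanMap, T.symm.norm_map, ← hudef, e]
    exact hS p hpn
  · have d1 : DifferentiableAt ℂ (normMobius (1 / 2) : R → R) x := differentiableAt_normMobius hu
    have d2 : DifferentiableAt ℂ (fun y => T (normMobius (1 / 2) y)) x :=
      T.toContinuousLinearEquiv.differentiableAt.comp x d1
    have d3 : DifferentiableAt ℂ (fun y => normMobius (-(1 / 2)) (T (normMobius (1 / 2) y))) x :=
      DifferentiableAt.comp x (g := normMobius (-(1 / 2))) (differentiableAt_normMobius hu2) d2
    exact T.symm.toContinuousLinearEquiv.differentiableAt.comp x d3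

lemma HasJet.cartanMap (T : R ≃ₗᵢ[ℂ] S) {γ : ℂ → R} {x w : R} (h : HasJet γ x w) :
    HasJet (fun z => cartanMap T (γ z)) x
      (w + (1 / 2 : ℂ) • (T.symm (T x * T x) - x * x)) := by
  have h1 := (((h.normMobius (1 / 2)).map
    (T.toContinuousLinearEquiv : R →L[ℂ] S)).normMobius (-(1 / 2))).map
    (T.symm.toContinuousLinearEquiv : S →L[ℂ] R)
  have ex : T.symm (T x) = x := T.symm_apply_apply x
  have ew : T.symm (T (w - (1 / 2 : ℂ) • (x * x)) - (-(1 / 2) : ℂ) • (T x * T x))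
      = w + (1 / 2 : ℂ) • (T.symm (T x * T x) - x * x) := by
    rw [map_sub, T.symm_apply_apply, map_smul]
    module
  rw [← ew]
  nth_rewrite 1 [← ex]
  exact h1

/-- The abstract form of the result: an isometric unital isomorphism preserves squares as soon as
Möbius maps preserve the unit balls. -/
lemma map_sq_of_mobius (T : R ≃ₗᵢ[ℂ] S) (hT1 : T 1 = 1)
    (hR : ∀ x : R, ‖x‖ < 1 → ‖mobius (1 / 2) x‖ < 1)
    (hS : ∀ x : S, ‖x‖ < 1 → ‖mobius (-(1 / 2)) x‖ < 1) (x : R) :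
    T (x * x) = T x * T x := by
  set d : R := T.symm (T x * T x) - x * x with hd
  set r : ℝ := (‖x‖ + 1)⁻¹ with hr
  have hr0 : 0 < r := by positivity
  have key : ∀ n : ℕ, HasJet (fun z : ℂ => (cartanMap T)^[n] (z • x)) x ((n : ℂ) • (1 / 2 : ℂ) • d)
      ∧ DifferentiableOn ℂ (fun z : ℂ => (cartanMap T)^[n] (z • x)) (Metric.ball 0 r)
      ∧ (cartanMap T)^[n] ((0 : ℂ) • x) = 0
      ∧ ∀ z ∈ Metric.ball (0 : ℂ) r, ‖(cartanMap T)^[n] (z • x)‖ < 1 := by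
    intro n
    induction n with
    | zero =>
      refine ⟨by simpa using hasJet_line x, ?_, by simp, ?_⟩
      · simp only [Function.iterate_zero, id]
        fun_prop
      · intro z hz
        rw [mem_ball_zero_iff] at hz
        rw [Function.iterate_zero, id, norm_smul]
        calc ‖z‖ * ‖x‖ ≤ r * ‖x‖ := by gcongr
          _ < r * (‖x‖ + 1) := by gcongr; linarith
          _ = 1 := inv_mul_cancel₀ (by positivity)
    | succ n ih =>
      obtain ⟨h1, h2, h3, h4⟩ := ih
      simp only [Function.iterate_succ_apply']
      refine ⟨?_, ?_, ?_, ?_⟩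
      · have := h1.cartanMap T
        rw [← hd] at this
        convert this using 1
        push_cast
        module
      · intro z hz
        exact DifferentiableAt.comp_differentiableWithinAt (g := cartanMap T) z
          (cartanMap_spec T hT1 hR hS (h4 z hz)).2 (h2 z hz)
      · rw [h3, cartanMap_zero]
      · intro z hz
        exact (cartanMap_spec T hT1 hR hS (h4 z hz)).1
  have hbound : ∀ n : ℕ, (n : ℝ) * ‖(1 / 2 : ℂ) • d‖ ≤ (r / 2)⁻¹ / (r / 2) := by
    intro n
    obtain ⟨h1, h2, h3, h4⟩ := key n
    have := h1.norm_le hr0 h2 h3 h4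
    rwa [norm_smul, Complex.norm_natCast] at this
  have hd0 : d = 0 := by
    by_contra hne
    have hpos : 0 < ‖(1 / 2 : ℂ) • d‖ := by
      rw [norm_pos_iff]
      exact smul_ne_zero (by norm_num) hne
    obtain ⟨n, hn⟩ := exists_nat_gt ((r / 2)⁻¹ / (r / 2) / ‖(1 / 2 : ℂ) • d‖)
    rw [div_lt_iff₀ hpos] at hn
    exact absurd (hbound n) (not_le.2 hn)
  rw [← sub_eq_zero.1 hd0, T.apply_symm_apply]

end Mobius

/-! ### Operator algebras -/

section Operator

variable {H : Type*} [NormedAddCommGroup H] [InnerProductSpace ℂ H]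

/-- The pointwise Möbius inequality, used with `y = x v` and `c = ‖x‖`. The two squared norms differ
by `(1 - t²)(‖v‖² - ‖y‖²)`, and `‖v + t y‖ ≤ 2 ‖v‖` turns this into a constant factor independent
of `v`, which is below `1` when `|t| < 1` and `c < 1`. -/
lemma norm_sq_mobius_le {t : ℝ} (ht : t ^ 2 ≤ 1) {c : ℝ} (hc0 : 0 ≤ c) (hc : c ≤ 1) {v y : H}
    (hy : ‖y‖ ≤ c * ‖v‖) :
    ‖y + (t : ℂ) • v‖ ^ 2 ≤ (1 - (1 - t ^ 2) * (1 - c ^ 2) / 4) * ‖v + (t : ℂ) • y‖ ^ 2 := by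
  have e1 : ‖y + (t : ℂ) • v‖ ^ 2
      = ‖y‖ ^ 2 + 2 * (t * RCLike.re (inner ℂ y v)) + t ^ 2 * ‖v‖ ^ 2 := by
    rw [norm_add_sq (𝕜 := ℂ), inner_smul_right, norm_smul, mul_pow]
    simp
  have e2 : ‖v + (t : ℂ) • y‖ ^ 2
      = ‖v‖ ^ 2 + 2 * (t * RCLike.re (inner ℂ y v)) + t ^ 2 * ‖y‖ ^ 2 := by
    rw [norm_add_sq (𝕜 := ℂ), inner_smul_right, norm_smul, mul_pow, ← inner_re_symm]
    simp
  have hy2 : ‖y‖ ^ 2 ≤ c ^ 2 * ‖v‖ ^ 2 := by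
    rw [← mul_pow]; gcongr
  have hcle : c ^ 2 ≤ 1 := by nlinarith
  have h2 : ‖v + (t : ℂ) • y‖ ≤ 2 * ‖v‖ := by
    have ht1 : |t| ≤ 1 := by rwa [← sq_le_one_iff_abs_le_one]
    calc ‖v + (t : ℂ) • y‖ ≤ ‖v‖ + |t| * ‖y‖ := by
          refine (norm_add_le _ _).trans ?_
          rw [norm_smul, Complex.norm_real, Real.norm_eq_abs]
      _ ≤ ‖v‖ + 1 * (1 * ‖v‖) := by
          gcongr
          exact hy.trans (by gcongr)
      _ = 2 * ‖v‖ := by ring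
  have h3 : ‖v + (t : ℂ) • y‖ ^ 2 ≤ 4 * ‖v‖ ^ 2 := by
    calc _ ≤ (2 * ‖v‖) ^ 2 := by gcongr
      _ = _ := by ring
  have hk : 0 ≤ (1 - t ^ 2) * (1 - c ^ 2) := mul_nonneg (by linarith) (by linarith)
  have h4 := mul_le_mul_of_nonneg_left h3 hk
  have h5 := mul_le_mul_of_nonneg_left hy2 (sub_nonneg.2 ht)
  nlinarith

lemma norm_mobius_lt_one (A : Subalgebra ℂ (H →L[ℂ] H)) [CompleteSpace A] {t : ℝ}
    (ht : t ^ 2 < 1) (x : A) (hx : ‖x‖ < 1) : ‖mobius (t : ℂ) x‖ < 1 := by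
  have ht1 : |t| ≤ 1 := by rw [← sq_le_one_iff_abs_le_one]; exact ht.le
  have hu : IsUnit (1 + (t : ℂ) • x) :=
    isUnit_one_add_smul (by rwa [Complex.norm_real, Real.norm_eq_abs]) hx
  set κ : ℝ := 1 - (1 - t ^ 2) * (1 - ‖x‖ ^ 2) / 4 with hκ
  have hx2 : ‖x‖ ^ 2 < 1 := by nlinarith [norm_nonneg x]
  have hκ1 : κ < 1 := by
    have := mul_pos (sub_pos.2 ht) (sub_pos.2 hx2)
    linarith
  have hκ0 : 0 ≤ κ := by
    nlinarith [sq_nonneg t, sq_nonneg ‖x‖, mul_nonneg (sq_nonneg t) (sub_pos.2 hx2).le]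
  have hle : ‖((mobius (t : ℂ) x : A) : H →L[ℂ] H)‖ ≤ Real.sqrt κ := by
    refine ContinuousLinearMap.opNorm_le_bound _ (Real.sqrt_nonneg _) fun w => ?_
    set v : H := ((Ring.inverse (1 + (t : ℂ) • x) : A) : H →L[ℂ] H) w with hv
    have hw : v + (t : ℂ) • (x : H →L[ℂ] H) v = w := by
      have := congrArg (fun a : A => (a : H →L[ℂ] H) w) (Ring.mul_inverse_cancel _ hu)
      simpa [hv] using this
    have hm : ((mobius (t : ℂ) x : A) : H →L[ℂ] H) w = (x : H →L[ℂ] H) v + (t : ℂ) • v := by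
      simp [mobius, hv]
    rw [hm]
    have := norm_sq_mobius_le (t := t) ht.le (norm_nonneg x) hx.le
      (v := v) (y := (x : H →L[ℂ] H) v) ((x : H →L[ℂ] H).le_opNorm v)
    rw [hw] at this
    refine le_of_sq_le_sq ?_ (by positivity)
    rw [mul_pow, Real.sq_sqrt hκ0]
    exact this
  exact hle.trans_lt ((Real.sqrt_lt' one_pos).2 (by simpa using hκ1))

end Operator

/-- Arazy–Solel: a surjective unital linear isometry between unital operator algebras
is a Jordan homomorphism. -/
theorem stmt_8 {H K : Type*} [NormedAddCommGroup H] [InnerProductSpace ℂ H] [CompleteSpace H]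
    [NormedAddCommGroup K] [InnerProductSpace ℂ K] [CompleteSpace K]
    (A : Subalgebra ℂ (H →L[ℂ] H)) (hA : IsClosed (A : Set (H →L[ℂ] H)))
    (B : Subalgebra ℂ (K →L[ℂ] K)) (hB : IsClosed (B : Set (K →L[ℂ] K)))
    (T : A →ₗ[ℂ] B) (hsurj : Function.Surjective T)
    (hiso : ∀ a : A, ‖(T a : K →L[ℂ] K)‖ = ‖(a : H →L[ℂ] H)‖) (hT1 : T 1 = 1) :
    ∀ a b : A, T (a * b + b * a) = T a * T b + T b * T a := by
  have : CompleteSpace A := hA.completeSpace_coe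
  have : CompleteSpace B := hB.completeSpace_coe
  let T' : A ≃ₗᵢ[ℂ] B := LinearIsometryEquiv.ofSurjective ⟨T, hiso⟩ hsurj
  have hsq : ∀ x : A, T (x * x) = T x * T x := by
    refine map_sq_of_mobius T' hT1 (fun x hx => ?_) (fun x hx => ?_)
    · simpa using norm_mobius_lt_one A (t := 1 / 2) (by norm_num) x hx
    · simpa using norm_mobius_lt_one B (t := -(1 / 2)) (by norm_num) x hx
  intro a b
  have e : a * b + b * a = (a + b) * (a + b) - a * a - b * b := by noncomm_ring
  rw [e, map_sub, map_sub, hsq, hsq, hsq, map_add]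
  noncomm_ring
end

section
/- Let A ⊆ B(H) and B ⊆ B(K) be unital operator algebras and let T : A → B be a surjective linear isometry. Then there exist an element u ∈ B with u* ∈ B which is unitary (u*·u = u·u* = 1 in B(K)), and a linear map π : A → B which is isometric and a Jordan homomorphism (π(a·b + b·a) = π(a)·π(b) + π(b)·π(a) for all a,b ∈ A), such that T(a) = u·π(a) for all a ∈ A. -/
/-! The proof is an elementary version of the Kaup–Upmeier argument on holomorphic vector fields
tangent to the unit ball.

For operators `y, a` with `‖y‖ ≤ 1`, the vector field `y ↦ a - y a* y` is tangent to the unit ball: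
`‖y + (a - y a* y)‖ ≤ 1 + 3 ‖a‖²` (`norm_add_sub_le`). Taking `a = t • 1`, this involves only the
algebra `A`, so it transports along `T`: with `u = T 1` and `P y = T ((T⁻¹ y)²)`,
`‖y + (t u - t̄ P y)‖ ≤ 1 + 3 |t|²` for all `y ∈ B`, `‖y‖ ≤ 1`.

At `y = 1` this says that `u - P 1` is skew-adjoint and `u + P 1` is self-adjoint, as operators with
purely imaginary, respectively real, numerical range (`adjoint_eq_neg_of_norm_le`).
Hence `u* = P 1 ∈ B`.

Now `y ↦ t u - t̄ y u* y` is a tangent field on the ball of `B` too, so averaging shows that the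
homogeneous quadratic map `Q y = P y - y u* y` satisfies `‖y + t Q y‖ ≤ 1 + 12 |t|²`.
A Liouville-type argument (`eq_zero_of_tangent`) forces `Q = 0`, that is `T (x²) = T x u* T x`.
Polarizing, `2 T a = T a u* u + u u* T a`; the choice `a = T⁻¹ 1` gives `u* u + u u* = 2`, so `u` is
unitary since `u* u ≤ 1` and `u u* ≤ 1`. Finally `π a = u* T a` is a Jordan homomorphism. -/

set_option maxHeartbeats 1000000
set_option synthInstance.maxHeartbeats 1000000

open ContinuousLinearMap

/-- The vector field `y ↦ a - y a* y` is tangent to the unit ball, with a quadratic error. It rests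
on the identity
`z* z = 1 - (1 - y* a) D (1 - a* y) + (y* a D a* y + w* w)` for `w = a - y a* y`, `z = y + w`,
`D = 1 - y* y ≥ 0`. -/
lemma norm_add_sub_le {H : Type*} [NormedAddCommGroup H] [InnerProductSpace ℂ H] [CompleteSpace H]
    (y a : H →L[ℂ] H) (hy : ‖y‖ ≤ 1) :
    ‖y + (a - y * star a * y)‖ ≤ 1 + 3 * ‖a‖ ^ 2 := by
  have h1 : ‖(1 : H →L[ℂ] H)‖ ≤ 1 := ContinuousLinearMap.norm_id_le
  set D : H →L[ℂ] H := 1 - star y * y with hD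
  set w : H →L[ℂ] H := a - y * star a * y with hw
  set r : H →L[ℂ] H := star y * a * D * star a * y + star w * w with hr
  have hyy : ‖star y * y‖ ≤ 1 := by
    rw [CStarRing.norm_star_mul_self]; nlinarith [norm_nonneg y]
  have hDpos : 0 ≤ D := sub_nonneg.2
    ((CStarAlgebra.norm_le_one_iff_of_nonneg _ (star_mul_self_nonneg y)).1 hyy)
  have hDn : ‖D‖ ≤ 2 := (norm_sub_le _ _).trans (by linarith)
  have hwn : ‖w‖ ≤ 2 * ‖a‖ := by
    calc ‖w‖ ≤ ‖a‖ + ‖y * star a * y‖ := norm_sub_le _ _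
      _ ≤ ‖a‖ + ‖y‖ * ‖star a‖ * ‖y‖ := by gcongr; exact norm_mul₃_le
      _ ≤ ‖a‖ + 1 * ‖a‖ * 1 := by rw [norm_star]; gcongr
      _ = 2 * ‖a‖ := by ring
  have hid : star (y + w) * (y + w)
      = 1 + r - star (1 - star a * y) * D * (1 - star a * y) := by
    simp only [hr, hD, hw, star_add, star_sub, star_mul, star_star, star_one]
    noncomm_ring
  have hle : star (y + w) * (y + w) ≤ 1 + r := by
    rw [hid]; exact sub_le_self _ (star_left_conjugate_nonneg hDpos _)
  have hrn : ‖r‖ ≤ 6 * ‖a‖ ^ 2 := by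
    have e1 : ‖star y * a * D * star a * y‖ ≤ 2 * ‖a‖ ^ 2 := by
      calc ‖star y * a * D * star a * y‖
          ≤ ‖star y‖ * ‖a‖ * ‖D‖ * ‖star a‖ * ‖y‖ := by
            refine (norm_mul_le _ _).trans ?_
            gcongr
            refine (norm_mul_le _ _).trans ?_
            gcongr
            exact norm_mul₃_le
        _ ≤ 1 * ‖a‖ * 2 * ‖a‖ * 1 := by rw [norm_star, norm_star]; gcongr
        _ = 2 * ‖a‖ ^ 2 := by ring
    have e2 : ‖star w * w‖ ≤ 4 * ‖a‖ ^ 2 := by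
      rw [CStarRing.norm_star_mul_self]; nlinarith [norm_nonneg w]
    exact (norm_add_le _ _).trans (by linarith)
  have hn := CStarAlgebra.norm_le_norm_of_nonneg_of_le (star_mul_self_nonneg (y + w)) hle
  rw [CStarRing.norm_star_mul_self] at hn
  have h2 : ‖y + w‖ * ‖y + w‖ ≤ 1 + 6 * ‖a‖ ^ 2 :=
    hn.trans ((norm_add_le _ _).trans (by linarith))
  refine abs_le_of_sq_le_sq' ?_ (by positivity) |>.2
  nlinarith [sq_nonneg (‖a‖ ^ 2)]

/-- If `‖1 + s x‖ ≤ 1 + C s²` for real `s`, the numerical range of `x` is purely imaginary. -/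
lemma adjoint_eq_neg_of_norm_le {K : Type*} [NormedAddCommGroup K] [InnerProductSpace ℂ K]
    [CompleteSpace K] (x : K →L[ℂ] K) (C : ℝ)
    (h : ∀ s : ℝ, ‖(1 : K →L[ℂ] K) + (s : ℂ) • x‖ ≤ 1 + C * s ^ 2) : star x = -x := by
  have hre : ∀ ξ : K, (inner ℂ (x ξ) ξ).re = 0 := by
    intro ξ
    have key : ∀ s : ℝ, s * (inner ℂ (x ξ) ξ).re ≤ C * ‖ξ‖ ^ 2 * s ^ 2 := by
      intro s
      have h1 : (inner ℂ (((1 : K →L[ℂ] K) + (s : ℂ) • x) ξ) ξ).re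
          = ‖ξ‖ ^ 2 + s * (inner ℂ (x ξ) ξ).re := by
        have : (inner ℂ ξ ξ).re = ‖ξ‖ ^ 2 := by
          rw [inner_self_eq_norm_sq_to_K]; norm_cast
        have h0 : ((1 : K →L[ℂ] K) + (s : ℂ) • x) ξ = ξ + (s : ℂ) • x ξ := rfl
        rw [h0, inner_add_left, inner_smul_left, Complex.conj_ofReal, Complex.add_re, this,
          Complex.re_ofReal_mul]
      have h2 : (inner ℂ (((1 : K →L[ℂ] K) + (s : ℂ) • x) ξ) ξ).re
          ≤ (1 + C * s ^ 2) * ‖ξ‖ * ‖ξ‖ := by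
        refine (Complex.re_le_norm _).trans ((norm_inner_le_norm _ _).trans ?_)
        gcongr
        exact (ContinuousLinearMap.le_opNorm _ _).trans (by gcongr; exact h s)
      nlinarith
    set r := (inner ℂ (x ξ) ξ).re
    set c := C * ‖ξ‖ ^ 2
    -- a linear function of `s` dominated by a quadratic one vanishes: test at small `s`
    by_contra hr
    have hr2 : 0 < r ^ 2 := by positivity
    have hc : 0 < |c| + 1 := by positivity
    have := key (r / (|c| + 1))
    have e : r / (|c| + 1) * r = r ^ 2 / (|c| + 1) := by ring
    have e' : c * (r / (|c| + 1)) ^ 2 = (r ^ 2 / (|c| + 1)) * (c / (|c| + 1)) := by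
      field_simp
    rw [e, e'] at this
    have hlt : c / (|c| + 1) < 1 := by
      rw [div_lt_one hc]; linarith [le_abs_self c]
    have hp : 0 < r ^ 2 / (|c| + 1) := by positivity
    nlinarith
  have hz : ((x + star x : K →L[ℂ] K) : K →ₗ[ℂ] K) = 0 := by
    rw [← inner_map_self_eq_zero]
    intro ξ
    have e : inner ℂ ((star x) ξ) ξ = inner ℂ ξ (x ξ) := by
      rw [ContinuousLinearMap.star_eq_adjoint, ContinuousLinearMap.adjoint_inner_left]
    have : inner ℂ ((x + star x) ξ) ξ = 0 := by
      rw [add_apply, inner_add_left, e, ← inner_conj_symm ξ (x ξ),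
        Complex.add_conj, hre]
      simp
    exact this
  have hz' : x + star x = 0 := by
    ext ξ
    exact congrArg (fun f : K →ₗ[ℂ] K => f ξ) hz
  exact eq_neg_of_add_eq_zero_right hz'

/-- Euler polygons with step `c` for the equation `y' = q y`. -/
def eulerIter {E : Type*} [NormedAddCommGroup E] [NormedSpace ℂ E] (q : E → E) (y : E) (c : ℂ) :
    ℕ → E
  | 0 => y
  | k + 1 => eulerIter q y c k + c • q (eulerIter q y c k)

/-- A homogeneous quadratic vector field tangent to the unit ball vanishes. The flow of `y' = q y`
would be a bounded entire function of complex time; in place of the flow, the `n`-step Euler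
polygons are used, which are bounded by `2` on a disc of radius `R` for `n` large and have
derivative `q y` at time `0`, so that Cauchy's estimate gives `‖q y‖ ≤ 2 / R`. -/
lemma eq_zero_of_tangent {E : Type*} [NormedAddCommGroup E] [NormedSpace ℂ E] (q : E → E)
    (hq : Differentiable ℂ q) (hhom : ∀ (c : ℂ) y, q (c • y) = c ^ 2 • q y) (C : ℝ) (hC : 0 ≤ C)
    (h : ∀ y, ‖y‖ ≤ 1 → ∀ t : ℂ, ‖y + t • q y‖ ≤ 1 + C * ‖t‖ ^ 2) (y : E) (hy : ‖y‖ ≤ 1) :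
    q y = 0 := by
  have hext : ∀ z, ‖z‖ ≤ 2 → ∀ t : ℂ, ‖z + t • q z‖ ≤ ‖z‖ * (1 + 4 * C * ‖t‖ ^ 2) := by
    intro z hz t
    rcases eq_or_ne z 0 with rfl | hz0
    · have : q 0 = 0 := by simpa using hhom 0 0
      simp [this]
    have hn : (‖z‖ : ℂ) ≠ 0 := by simpa using hz0
    have hn' : 0 < ‖z‖ := by simpa using hz0
    set v : E := (‖z‖ : ℂ)⁻¹ • z with hv
    have hzv : z = (‖z‖ : ℂ) • v := by rw [hv, smul_inv_smul₀ hn]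
    have hvn : ‖v‖ ≤ 1 := by
      rw [hv, norm_smul, norm_inv, Complex.norm_real, norm_norm, inv_mul_cancel₀ hn'.ne']
    have e : z + t • q z = (‖z‖ : ℂ) • (v + (t * ‖z‖) • q v) := by
      conv_lhs => rw [hzv, hhom]
      module
    rw [e, norm_smul, Complex.norm_real, norm_norm]
    gcongr
    refine (h v hvn _).trans ?_
    rw [norm_mul, Complex.norm_real, norm_norm, mul_pow]
    have : ‖z‖ ^ 2 ≤ 4 := by nlinarith
    nlinarith [mul_nonneg hC (sq_nonneg ‖t‖)]
  have hR : ∀ R : ℝ, 0 < R → ‖q y‖ ≤ 2 / R := by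
    intro R hR
    obtain ⟨n, hn⟩ := exists_nat_gt (max 1 (4 * C * R ^ 2 / Real.log 2))
    have hn0 : (0 : ℝ) < n := lt_trans one_pos ((le_max_left _ _).trans_lt hn)
    have hn1 : 4 * C * R ^ 2 / n ≤ Real.log 2 := by
      have := (le_max_right _ _).trans_lt hn
      rw [div_lt_iff₀ (Real.log_pos one_lt_two)] at this
      rw [div_le_iff₀ hn0]; linarith
    set b : ℝ := 1 + 4 * C * (R / n) ^ 2 with hb
    have hb1 : 1 ≤ b := by
      have : 0 ≤ 4 * C * (R / n) ^ 2 := by positivity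
      linarith
    have hbn : b ^ n ≤ 2 := by
      calc b ^ n ≤ Real.exp (4 * C * (R / n) ^ 2) ^ n := by
            gcongr; rw [hb, add_comm]; exact Real.add_one_le_exp _
        _ = Real.exp (4 * C * R ^ 2 / n) := by
            rw [← Real.exp_nat_mul]; congr 1; field_simp
        _ ≤ Real.exp (Real.log 2) := Real.exp_le_exp.2 hn1
        _ = 2 := Real.exp_log two_pos
    have hdiff : ∀ k, Differentiable ℂ (fun ζ : ℂ => eulerIter q y (ζ / n) k) := by
      intro k
      induction k with
      | zero => exact differentiable_const _
      | succ k ih =>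
        exact ih.add (Differentiable.smul (differentiable_id.div_const _) (hq.comp ih))
    have hzero : ∀ k, eulerIter q y 0 k = y := by
      intro k
      induction k with
      | zero => rfl
      | succ k ih => simp [eulerIter, ih]
    have hder : ∀ k : ℕ, HasDerivAt (fun ζ : ℂ => eulerIter q y (ζ / n) k)
        (((k : ℂ) / n) • q y) 0 := by
      intro k
      induction k with
      | zero => simpa [eulerIter] using hasDerivAt_const (0 : ℂ) y
      | succ k ih =>
        have h1 : HasDerivAt (fun ζ : ℂ => ζ / n) (1 / (n : ℂ)) 0 :=
          (hasDerivAt_id (0 : ℂ)).div_const _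
        have h2 := ((hq.comp (hdiff k)) 0).hasDerivAt
        have h3 := ih.add (h1.smul h2)
        refine h3.congr_deriv ?_
        simp only [Function.comp, zero_div, zero_smul, hzero, zero_add]
        rw [← add_smul]
        congr 1
        push_cast
        ring
    have hbound : ∀ ζ : ℂ, ‖ζ‖ = R → ∀ k ≤ n, ‖eulerIter q y (ζ / n) k‖ ≤ b ^ k := by
      intro ζ hζ k
      induction k with
      | zero => intro _; simpa [eulerIter] using hy
      | succ k ih =>
        intro hk
        have ih' := ih (by omega)
        have h2 : b ^ k ≤ 2 := (pow_le_pow_right₀ hb1 (by omega)).trans hbn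
        refine (hext _ (ih'.trans h2) _).trans ?_
        have : ‖ζ / n‖ = R / n := by simp [hζ]
        rw [this, pow_succ]
        exact mul_le_mul_of_nonneg_right ih' (by linarith)
    have := Complex.norm_deriv_le_of_forall_mem_sphere_norm_le (c := 0) (C := 2) hR
      (hdiff n).diffContOnCl (fun ζ hζ => (hbound ζ (by simpa using hζ) n le_rfl).trans hbn)
    rw [(hder n).deriv, div_self (by exact_mod_cast hn0.ne'), one_smul] at this
    exact this
  by_contra hne
  have hp : 0 < ‖q y‖ := norm_pos_iff.2 hne
  have := hR (4 / ‖q y‖) (by positivity)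
  have e : 2 / (4 / ‖q y‖) = ‖q y‖ / 2 := by field_simp; norm_num
  linarith

/-- Banach–Stone theorem: a surjective linear isometry `T : A → B` between unital operator
algebras factors as `T = u π(·)` for a unitary `u` in the diagonal `Δ(B)` and an isometric
Jordan homomorphism `π : A → B`. -/
theorem stmt_10 {H K : Type*} [NormedAddCommGroup H] [InnerProductSpace ℂ H] [CompleteSpace H]
    [NormedAddCommGroup K] [InnerProductSpace ℂ K] [CompleteSpace K]
    (A : Subalgebra ℂ (H →L[ℂ] H)) (hA : IsClosed (A : Set (H →L[ℂ] H)))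
    (B : Subalgebra ℂ (K →L[ℂ] K)) (hB : IsClosed (B : Set (K →L[ℂ] K)))
    (T : A →ₗ[ℂ] B) (hsurj : Function.Surjective T)
    (hiso : ∀ a : A, ‖(T a : K →L[ℂ] K)‖ = ‖(a : H →L[ℂ] H)‖) :
    ∃ u : K →L[ℂ] K, u ∈ B ∧ adjoint u ∈ B ∧ adjoint u * u = 1 ∧ u * adjoint u = 1 ∧
      ∃ π : A →ₗ[ℂ] B, (∀ a : A, ‖(π a : K →L[ℂ] K)‖ = ‖(a : H →L[ℂ] H)‖) ∧
        (∀ a b : A, π (a * b + b * a) = π a * π b + π b * π a) ∧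
        ∀ a : A, (T a : K →L[ℂ] K) = u * (π a : K →L[ℂ] K) := by
  have hTn : ∀ a : A, ‖T a‖ = ‖a‖ := hiso
  let e : A ≃ₗᵢ[ℂ] B := LinearIsometryEquiv.ofSurjective ⟨T, hTn⟩ hsurj
  have hTe : ∀ y, T (e.symm y) = y := e.apply_symm_apply
  set u : K →L[ℂ] K := (T 1 : K →L[ℂ] K) with hu
  have hun : ‖u‖ ≤ 1 := by
    rw [hu, hiso]; exact ContinuousLinearMap.norm_id_le
  -- the tangent field `t - t̄ y²` of `A`, transported to `B`
  have tan1 : ∀ y : B, ‖y‖ ≤ 1 → ∀ t : ℂ,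
      ‖y + (t • T 1 - star t • T (e.symm y * e.symm y))‖ ≤ 1 + 3 * ‖t‖ ^ 2 := by
    intro y hy t
    have h1 := norm_add_sub_le (e.symm y : H →L[ℂ] H) (t • 1) (by
      have : ‖e.symm y‖ ≤ 1 := by simpa using hy
      exact this)
    have h2 : y + (t • T 1 - star t • T (e.symm y * e.symm y))
        = T (e.symm y + (t • 1 - star t • (e.symm y * e.symm y))) := by
      simp [hTe]
    rw [h2, hTn]
    have h3 : ‖e.symm y + (t • 1 - star t • (e.symm y * e.symm y))‖
        = ‖(e.symm y : H →L[ℂ] H) + (t • 1 - (e.symm y : H →L[ℂ] H) * star (t • 1)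
          * (e.symm y : H →L[ℂ] H))‖ := by
      rw [star_smul, star_one, mul_smul_comm, mul_one, smul_mul_assoc]
      rfl
    rw [h3]
    refine h1.trans ?_
    have h4 : ‖t • (1 : H →L[ℂ] H)‖ ≤ ‖t‖ := by
      rw [norm_smul]
      exact mul_le_of_le_one_right (norm_nonneg _) ContinuousLinearMap.norm_id_le
    gcongr
  set v : A := e.symm 1 with hv
  have h1B : ‖(1 : B)‖ ≤ 1 := ContinuousLinearMap.norm_id_le
  have hskew : ∀ t : ℂ, ‖t‖ = 1 →
      star (t • u - star t • (T (v * v) : K →L[ℂ] K)) = -(t • u - star t • (T (v * v))) := by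
    intro t ht
    refine adjoint_eq_neg_of_norm_le _ 3 fun s => ?_
    have h1 := tan1 1 h1B ((s : ℂ) * t)
    have h2 : ‖(1 : B) + (((s : ℂ) * t) • T 1 - star ((s : ℂ) * t) • T (v * v))‖
        = ‖(1 : K →L[ℂ] K) + (s : ℂ) • (t • u - star t • (T (v * v) : K →L[ℂ] K))‖ := by
      have : star ((s : ℂ) * t) = s * star t := by simp
      rw [this, smul_sub, smul_smul, smul_smul]
      rfl
    rw [← h2]
    refine h1.trans_eq ?_
    simp [ht]
  have hustar : star u = (T (v * v) : K →L[ℂ] K) := by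
    have e1 := hskew 1 (by simp)
    have e2 := hskew Complex.I (by simp)
    simp only [star_sub, star_smul, star_one, one_smul, star_star] at e1 e2
    have e3 : star u + star (T (v * v) : K →L[ℂ] K) = u + (T (v * v) : K →L[ℂ] K) := by
      have e2' := congrArg (fun x => Complex.I • x) e2
      simp only [smul_sub, smul_neg, smul_smul, Complex.star_def, Complex.conj_I,
        Complex.I_mul_I, neg_neg, neg_smul, one_smul] at e2'
      rw [← sub_eq_zero] at e2' ⊢
      rw [← e2']
      module
    have e4 : (2 : ℂ) • star u = (2 : ℂ) • (T (v * v) : K →L[ℂ] K) := by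
      rw [two_smul, two_smul]
      calc star u + star u
          = (star u - star (T (v * v) : K →L[ℂ] K)) + (star u + star (T (v * v) : K →L[ℂ] K)) := by
            abel
        _ = (T (v * v) : K →L[ℂ] K) + (T (v * v) : K →L[ℂ] K) := by rw [e1, e3]; abel
    exact smul_right_injective _ (two_ne_zero) e4
  have huB : u ∈ B := (T 1).2
  have husB : star u ∈ B := hustar ▸ (T (v * v)).2
  let us : B := ⟨star u, husB⟩
  -- the tangent field `t u - t̄ y u* y` of `B`
  have tan2 : ∀ y : B, ‖y‖ ≤ 1 → ∀ t : ℂ,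
      ‖y + (t • T 1 - star t • (y * us * y))‖ ≤ 1 + 3 * ‖t‖ ^ 2 := by
    intro y hy t
    have h1 := norm_add_sub_le (y : K →L[ℂ] K) (t • u) hy
    have h3 : ‖y + (t • T 1 - star t • (y * us * y))‖
        = ‖(y : K →L[ℂ] K) + (t • u - (y : K →L[ℂ] K) * star (t • u) * (y : K →L[ℂ] K))‖ := by
      rw [star_smul, mul_smul_comm, smul_mul_assoc]
      rfl
    rw [h3]
    refine h1.trans ?_
    have h4 : ‖t • u‖ ≤ ‖t‖ := by
      rw [norm_smul]
      exact mul_le_of_le_one_right (norm_nonneg _) hun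
    gcongr
  let q : B → B := fun y => T (e.symm y * e.symm y) - y * us * y
  have hqd : Differentiable ℂ q := by
    have hs : Differentiable ℂ (fun y : B => e.symm y) :=
      e.symm.toContinuousLinearEquiv.differentiable
    have he : Differentiable ℂ (fun a : A => T a) := e.toContinuousLinearEquiv.differentiable
    exact (he.comp (hs.mul hs)).sub ((differentiable_id.mul_const us).mul differentiable_id)
  have hqh : ∀ (c : ℂ) (y : B), q (c • y) = c ^ 2 • q y := by
    intro c y
    simp only [q, map_smul, smul_mul_assoc, mul_smul_comm, smul_smul, smul_sub, pow_two]
  have hqt : ∀ y : B, ‖y‖ ≤ 1 → ∀ t : ℂ, ‖y + t • q y‖ ≤ 1 + 12 * ‖t‖ ^ 2 := by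
    intro y hy t
    -- the field `t q` is the average of two tangent fields
    have h1 := tan1 y hy (-(2 * star t))
    have h2 := tan2 y hy (2 * star t)
    have e1 : y + t • q y = (2 : ℂ)⁻¹ •
        ((y + (-(2 * star t) • T 1 - star (-(2 * star t)) • T (e.symm y * e.symm y)))
        + (y + ((2 * star t) • T 1 - star (2 * star t) • (y * us * y)))) := by
      have hc : star (2 * star t) = 2 * t := by simp
      rw [star_neg, hc]
      simp only [q]
      module
    rw [e1, norm_smul]
    have h3 := norm_add_le
      (y + (-(2 * star t) • T 1 - star (-(2 * star t)) • T (e.symm y * e.symm y)))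
      (y + ((2 * star t) • T 1 - star (2 * star t) • (y * us * y)))
    have e2 : ‖-(2 * star t)‖ = 2 * ‖t‖ := by simp
    have e3 : ‖2 * star t‖ = 2 * ‖t‖ := by simp
    rw [e2] at h1
    rw [e3] at h2
    have e4 : ‖(2 : ℂ)⁻¹‖ = 2⁻¹ := by simp
    rw [e4]
    nlinarith
  have hq0 : ∀ y : B, q y = 0 := by
    intro y
    have hn : (0 : ℝ) < ‖y‖ + 1 := by positivity
    have hnc : ((‖y‖ + 1 : ℝ) : ℂ) ≠ 0 := by exact_mod_cast hn.ne'
    have h0 := eq_zero_of_tangent q hqd hqh 12 (by norm_num) hqt (((‖y‖ + 1 : ℝ) : ℂ)⁻¹ • y) (by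
      rw [norm_smul, norm_inv, Complex.norm_real, Real.norm_of_nonneg hn.le, inv_mul_le_iff₀ hn]
      linarith)
    rw [hqh] at h0
    exact (smul_eq_zero.1 h0).resolve_left (pow_ne_zero _ (inv_ne_zero hnc))
  have hsq : ∀ a : A, T (a * a) = T a * us * T a := by
    intro a
    have := hq0 (T a)
    have hea : e.symm (T a) = a := e.symm_apply_apply a
    simp only [q, hea] at this
    exact sub_eq_zero.1 this
  have hpol : ∀ a b : A, T (a * b + b * a) = T a * us * T b + T b * us * T a := by
    intro a b
    have h1 := hsq (a + b)
    have h2 : (a + b) * (a + b) = a * a + b * b + (a * b + b * a) := by noncomm_ring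
    rw [h2, map_add, map_add, hsq a, hsq b, map_add T a b] at h1
    have h3 : (T a + T b) * us * (T a + T b)
        = T a * us * T a + T b * us * T b + (T a * us * T b + T b * us * T a) := by noncomm_ring
    rw [h3] at h1
    exact add_left_cancel h1
  have hsum : star u * u + u * star u = 1 + 1 := by
    have h1 := hpol v 1
    rw [mul_one, one_mul, map_add, hv, hTe, one_mul, mul_one] at h1
    exact (congrArg (fun x : B => (x : K →L[ℂ] K)) h1).symm
  have hle1 : 0 ≤ 1 - star u * u := sub_nonneg.2
    ((CStarAlgebra.norm_le_one_iff_of_nonneg _ (star_mul_self_nonneg u)).1 (by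
      rw [CStarRing.norm_star_mul_self]; nlinarith [norm_nonneg u]))
  have hle2 : 0 ≤ 1 - u * star u := sub_nonneg.2
    ((CStarAlgebra.norm_le_one_iff_of_nonneg _ (mul_star_self_nonneg u)).1 (by
      rw [CStarRing.norm_self_mul_star]; nlinarith [norm_nonneg u]))
  have hadd : (1 - star u * u) + (1 - u * star u) = 0 := by
    rw [sub_add_sub_comm, hsum, sub_self]
  obtain ⟨hz1, hz2⟩ := (add_eq_zero_iff_of_nonneg hle1 hle2).1 hadd
  have huu : star u * u = 1 := (sub_eq_zero.1 hz1).symm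
  have huu' : u * star u = 1 := (sub_eq_zero.1 hz2).symm
  refine ⟨u, huB, husB, huu, huu', (LinearMap.mulLeft ℂ us) ∘ₗ T, ?_, ?_, ?_⟩
  · intro a
    rw [← hiso a]
    exact CStarRing.norm_mem_unitary_mul (U := star u) (T a : K →L[ℂ] K)
      (Unitary.star_mem (Unitary.mem_iff.2 ⟨huu, huu'⟩))
  · intro a b
    simp only [LinearMap.comp_apply, LinearMap.mulLeft_apply, hpol]
    noncomm_ring
  · intro a
    change (T a : K →L[ℂ] K) = u * (star u * (T a : K →L[ℂ] K))
    rw [← mul_assoc, huu', one_mul]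
end

section
/- Let A be a complex C*-algebra and let P : A → A be a positive contractive linear projection: P is linear, P∘P = P, ‖P(a)‖ ≤ ‖a‖ for all a, and 0 ≤ a implies 0 ≤ P(a). Then P(P(a) ∘ P(b)) = P(a ∘ P(b)) for all a, b ∈ A, where x ∘ y = (xy + yx)/2 is the Jordan product. If in addition the range of P is closed under the Jordan product (x, y in the range of P implies x ∘ y is in the range of P), then P is a Jordan conditional expectation: P(a ∘ P(b)) = P(a) ∘ P(b) for all a, b ∈ A. -/
/-!
The argument rests on Kadison's inequality `P a * P a ≤ P (a * a)` for self-adjoint `a`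
(`kadison`). Applying `P` once more, `D (a, a) = P (a ∘ a) - P (P a ∘ P a)` is nonnegative. For
self-adjoint `b` in the range of `P` one has `D (b, b) = 0`, so
`0 ≤ D (a + t b, a + t b) = D (a, a) + 2 t D (a, b)` for every integer `t`, which forces
`D (a, b) = 0`. Splitting into real and imaginary parts gives the first claim; the second is
immediate, since `P` fixes `P a ∘ P b` when the range is a Jordan subalgebra.

Kadison's inequality is first proved for a unital positive map `Φ` and `0 ≤ a ≤ 1`. The Bernstein
polynomials `B k` of degree `n` evaluated at `a` are positive elements with sum `1` and with
explicit first and second moments. Put `x = Φ a` and `q k = Φ (B k)`; then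
`0 ≤ ∑ (k - n x) (q k) (k - n x) = n ((x - Φ (a * a)) - n (x * x - Φ (a * a)))`,
and letting `n → ∞` gives `x * x ≤ Φ (a * a)`. An affine change of variable removes the
restriction `0 ≤ a ≤ 1`, and a positive contraction of a non-unital algebra extends to a unital
positive map of the unitization (`unitalExt`).
-/

set_option maxHeartbeats 1000000
set_option synthInstance.maxHeartbeats 1000000

/-- The order of a C⋆-algebra is Archimedean, because the positive cone is closed. -/
theorem nonpos_of_forall_nsmul_le {A : Type*} [NonUnitalCStarAlgebra A] [PartialOrder A]
    [StarOrderedRing A] {c d : A} (h : ∀ n : ℕ, 0 < n → n • d ≤ c) : d ≤ 0 := by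
  have hlim : Filter.Tendsto (fun n : ℕ => ((n : ℝ)⁻¹) • c) Filter.atTop (nhds 0) := by
    simpa using (tendsto_inv_atTop_nhds_zero_nat (𝕜 := ℝ)).smul_const c
  refine ge_of_tendsto hlim ?_
  filter_upwards [Filter.eventually_gt_atTop 0] with n hn
  have hn' : (n : ℝ) ≠ 0 := by positivity
  have := smul_le_smul_of_nonneg_left (h n hn) (inv_nonneg.2 (Nat.cast_nonneg (α := ℝ) n))
  rwa [← Nat.cast_smul_eq_nsmul ℝ, smul_smul, inv_mul_cancel₀ hn', one_smul] at this

theorem aeval_bernstein_nonneg {B : Type*} [CStarAlgebra B] [PartialOrder B] [StarOrderedRing B]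
    {a : B} (h0 : 0 ≤ a) (h1 : a ≤ 1) (n k : ℕ) :
    0 ≤ Polynomial.aeval a (bernsteinPolynomial ℂ n k) := by
  have hc : Commute a (1 - a) := (Commute.one_right a).sub_right (Commute.refl a)
  have hpow : ∀ (b : B) (_ : 0 ≤ b) (m : ℕ), 0 ≤ b ^ m := fun b hb m => by
    induction m with
    | zero => simp
    | succ m ih =>
      rw [pow_succ]
      exact ((Commute.refl b).pow_left m).mul_nonneg ih hb
  have h := (hc.pow_pow k (n - k)).mul_nonneg (hpow a h0 k) (hpow _ (sub_nonneg.2 h1) (n - k))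
  have := nsmul_nonneg h (n.choose k)
  simpa [bernsteinPolynomial, nsmul_eq_mul, mul_assoc] using this

/-- Kadison's inequality for unital positive maps and `0 ≤ a ≤ 1`, by Bernstein polynomials. -/
theorem kadison_of_le_one {B : Type*} [CStarAlgebra B] [PartialOrder B] [StarOrderedRing B]
    (Φ : B →ₗ[ℂ] B) (hone : Φ 1 = 1) (hpos : ∀ a, 0 ≤ a → 0 ≤ Φ a)
    {a : B} (h0 : 0 ≤ a) (h1 : a ≤ 1) : Φ a * Φ a ≤ Φ (a * a) := by
  rw [← sub_nonpos]
  refine nonpos_of_forall_nsmul_le (c := Φ a - Φ (a * a)) fun n hn => ?_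
  set x := Φ a with hx
  set y := Φ (a * a) with hy
  have hxs : IsSelfAdjoint x := .of_nonneg (hpos a h0)
  set q : ℕ → B := fun k => Φ (Polynomial.aeval a (bernsteinPolynomial ℂ n k)) with hq
  have hqpos : ∀ k, 0 ≤ q k := fun k => hpos _ (aeval_bernstein_nonneg h0 h1 n k)
  have s0 : ∑ k ∈ Finset.range (n + 1), q k = 1 := by
    rw [← map_sum, ← map_sum, bernsteinPolynomial.sum, map_one, hone]
  have s1 : ∑ k ∈ Finset.range (n + 1), k • q k = n • x := by
    have := congrArg (fun p => Φ (Polynomial.aeval a p)) (bernsteinPolynomial.sum_smul ℂ n)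
    simpa only [map_sum, map_nsmul, Polynomial.aeval_X] using this
  have s2 : ∑ k ∈ Finset.range (n + 1), (k * (k - 1)) • q k = (n * (n - 1)) • y := by
    have := congrArg (fun p => Φ (Polynomial.aeval a p)) (bernsteinPolynomial.sum_mul_smul ℂ n)
    simpa only [map_sum, map_nsmul, pow_two, map_mul, Polynomial.aeval_X] using this
  have key : 0 ≤ ∑ k ∈ Finset.range (n + 1),
      ((k : B) - n • x) * q k * ((k : B) - n • x) := by
    refine Finset.sum_nonneg fun k _ => ?_
    have hs : IsSelfAdjoint ((k : B) - n • x) :=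
      (IsSelfAdjoint.natCast k).sub (by rw [IsSelfAdjoint, star_nsmul, hxs.star_eq])
    exact hs.conjugate_nonneg (hqpos k)
  have expand : ∀ k : ℕ, ((k : B) - n • x) * q k * ((k : B) - n • x) =
      (k * (k - 1)) • q k + k • q k - n • (x * (k • q k)) - n • ((k • q k) * x)
        + (n * n) • (x * q k * x) := by
    intro k
    have hk : (k * (k - 1)) • q k + k • q k = (k * k) • q k := by
      rw [← add_smul]; congr 1
      cases k <;> simp; ring
    rw [hk, ← nsmul_one k]
    simp only [sub_mul, mul_sub, smul_mul_assoc, mul_smul_comm, one_mul, mul_one, mul_assoc]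
    module
  have total : ∑ k ∈ Finset.range (n + 1), ((k : B) - n • x) * q k * ((k : B) - n • x)
      = n • ((x - y) - n • (x * x - y)) := by
    simp only [expand, Finset.sum_add_distrib, Finset.sum_sub_distrib, ← Finset.smul_sum,
      ← Finset.mul_sum, ← Finset.sum_mul, s0, s1, s2]
    obtain ⟨m, rfl⟩ : ∃ m, n = m + 1 := ⟨n - 1, by omega⟩
    simp only [nsmul_eq_mul, Nat.add_sub_cancel]
    push_cast
    have e : x * (m : B) = m * x := (Nat.cast_commute m x).eq.symm
    simp only [mul_add, add_mul, mul_one, one_mul, mul_sub, ← mul_assoc, e]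
    simp only [mul_assoc]
    noncomm_ring
  rw [total, ← Nat.cast_smul_eq_nsmul ℝ] at key
  have hn' : (n : ℝ) ≠ 0 := by positivity
  have := smul_nonneg (inv_nonneg.2 (Nat.cast_nonneg (α := ℝ) n)) key
  rw [smul_smul, inv_mul_cancel₀ hn', one_smul] at this
  exact sub_nonneg.1 this

/-- Kadison's inequality for unital positive maps. -/
theorem kadison_unital {B : Type*} [CStarAlgebra B] [PartialOrder B] [StarOrderedRing B]
    (Φ : B →ₗ[ℂ] B) (hone : Φ 1 = 1) (hpos : ∀ a, 0 ≤ a → 0 ≤ Φ a)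
    {a : B} (ha : IsSelfAdjoint a) : Φ a * Φ a ≤ Φ (a * a) := by
  -- `(a + r) / (2 r)` lies between `0` and `1`
  obtain ⟨r, hr, har⟩ : ∃ r : ℝ, 0 < r ∧ ‖a‖ ≤ r := ⟨‖a‖ + 1, by positivity, by simp⟩
  have hup : a ≤ algebraMap ℝ B r :=
    ha.le_algebraMap_norm_self.trans (algebraMap_mono B har)
  have hlo : -algebraMap ℝ B r ≤ a :=
    (neg_le_neg (algebraMap_mono B har)).trans ha.neg_algebraMap_norm_le_self
  set t : ℝ := (2 * r)⁻¹ with ht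
  have htp : 0 ≤ t := by positivity
  have htr : t * (2 * r) = 1 := inv_mul_cancel₀ (by positivity)
  have hΦr : ∀ (s : ℝ) (b : B), Φ (s • b) = s • Φ b := fun s b => by
    simp
  have h0 : 0 ≤ t • (a + r • (1 : B)) := by
    refine smul_nonneg htp ?_
    rw [← Algebra.algebraMap_eq_smul_one]
    exact neg_le_iff_add_nonneg.1 hlo
  have h1 : t • (a + r • (1 : B)) ≤ 1 := by
    calc t • (a + r • (1 : B)) ≤ t • (r • 1 + r • (1 : B)) := by
          refine smul_le_smul_of_nonneg_left ?_ htp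
          rw [← Algebra.algebraMap_eq_smul_one]
          exact add_le_add_left hup _
      _ = 1 := by rw [← add_smul, smul_smul, ← two_mul, htr, one_smul]
  have h := kadison_of_le_one Φ hone hpos h0 h1
  have e1 : Φ (t • (a + r • (1 : B))) * Φ (t • (a + r • (1 : B))) =
      (t * t) • (Φ a * Φ a + (2 * r) • Φ a + (r * r) • 1) := by
    simp only [hΦr, map_add, hone, smul_mul_assoc, mul_smul_comm, smul_smul, add_mul,
      mul_add, mul_one, one_mul]
    module
  have e2 : Φ ((t • (a + r • (1 : B))) * (t • (a + r • (1 : B)))) =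
      (t * t) • (Φ (a * a) + (2 * r) • Φ a + (r * r) • 1) := by
    simp only [smul_mul_assoc, mul_smul_comm, smul_smul, add_mul, mul_add, mul_one, one_mul,
      hΦr, map_add, hone]
    module
  rw [e1, e2] at h
  have htt : 0 < t * t := by positivity
  have h2 := smul_le_smul_of_nonneg_left h (inv_nonneg.2 htt.le)
  rw [smul_smul, smul_smul, inv_mul_cancel₀ htt.ne', one_smul, one_smul] at h2
  simpa using h2

theorem isSelfAdjoint_map_of_pos {A : Type*} [NonUnitalCStarAlgebra A] [PartialOrder A]
    [StarOrderedRing A] (P : A →ₗ[ℂ] A) (hpos : ∀ a : A, 0 ≤ a → 0 ≤ P a)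
    {a : A} (ha : IsSelfAdjoint a) : IsSelfAdjoint (P a) := by
  rw [← CFC.posPart_sub_negPart a ha, map_sub]
  exact (IsSelfAdjoint.of_nonneg (hpos _ (CFC.posPart_nonneg a))).sub
    (.of_nonneg (hpos _ (CFC.negPart_nonneg a)))

open Unitization in
/-- The unital extension `r + a ↦ r + P a` of `P` to the unitization. -/
noncomputable def unitalExt {A : Type*} [NonUnitalCStarAlgebra A] (P : A →ₗ[ℂ] A) :
    Unitization ℂ A →ₗ[ℂ] Unitization ℂ A where
  toFun z := inl z.fst + inr (P z.snd)
  map_add' z w := by ext <;> simp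
  map_smul' c z := by ext <;> simp

open Unitization in
/-- The unital extension of a positive contraction is positive: `0 ≤ r + a` means `‖a⁻‖ ≤ r`, hence
`P a⁻ ≤ r` by contractivity, and `r + P a = (r - P a⁻) + P a⁺`. -/
theorem unitalExt_nonneg {A : Type*} [NonUnitalCStarAlgebra A] [PartialOrder A]
    [StarOrderedRing A] (P : A →ₗ[ℂ] A) (hcontr : ∀ a : A, ‖P a‖ ≤ ‖a‖)
    (hpos : ∀ a : A, 0 ≤ a → 0 ≤ P a) (z : Unitization ℂ A) (hz : 0 ≤ z) :
    0 ≤ unitalExt P z := by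
  obtain ⟨r, hr, hzr⟩ : ∃ r : ℝ, 0 ≤ r ∧ z.fst = r := by
    obtain ⟨w, rfl⟩ := CStarAlgebra.nonneg_iff_eq_star_mul_self.1 hz
    refine ⟨‖w.fst‖ ^ 2, by positivity, ?_⟩
    simp [Complex.conj_mul']
  have hsa : IsSelfAdjoint z.snd := by
    have := congrArg (fun w : Unitization ℂ A => w.snd) (IsSelfAdjoint.of_nonneg hz).star_eq
    simpa [IsSelfAdjoint] using this
  have hinl : ∀ s : ℝ, (inl (s : ℂ) : Unitization ℂ A) = algebraMap ℝ _ s := by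
    intro s
    rfl
  set a := z.snd with ha
  have hz' : z = algebraMap ℝ _ r + (a : Unitization ℂ A) := by
    rw [← hinl, ← hzr, ha, inl_fst_add_inr_snd_eq]
  have hlow : algebraMap ℝ (Unitization ℂ A) (-r) ≤ (a : Unitization ℂ A) := by
    rw [map_neg, neg_le_iff_add_nonneg, add_comm, ← hz']
    exact hz
  have hspec := (algebraMap_le_iff_le_spectrum (hsa.inr ℂ)).1 hlow
  have hnorm : ‖a⁻‖ ≤ r := by
    rw [CFC.negPart_def]
    refine norm_cfcₙ_le fun x hx => ?_
    rw [Unitization.quasispectrum_eq_spectrum_inr' ℝ ℂ] at hx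
    rw [Real.norm_of_nonneg (negPart_nonneg x), negPart_def]
    exact sup_le (by linarith [hspec x hx]) hr
  have hneg : ((P a⁻ : A) : Unitization ℂ A) ≤ algebraMap ℝ _ r := by
    rw [← CStarAlgebra.norm_le_iff_le_algebraMap _ hr
      (inr_nonneg_iff.2 (hpos _ (CFC.negPart_nonneg a))), norm_inr]
    exact (hcontr _).trans hnorm
  have hsplit : unitalExt P z =
      (algebraMap ℝ _ r - ((P a⁻ : A) : Unitization ℂ A)) + ((P a⁺ : A) : Unitization ℂ A) := by
    have : P a = P a⁺ - P a⁻ := by rw [← map_sub, CFC.posPart_sub_negPart a hsa]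
    change inl z.fst + inr (P a) = _
    rw [hzr, hinl, this, inr_sub]
    abel
  rw [hsplit]
  exact add_nonneg (sub_nonneg.2 hneg) (inr_nonneg_iff.2 (hpos _ (CFC.posPart_nonneg a)))

/-- Kadison's inequality for positive contractions of a possibly non-unital C⋆-algebra. -/
theorem kadison {A : Type*} [NonUnitalCStarAlgebra A] [PartialOrder A]
    [StarOrderedRing A] (P : A →ₗ[ℂ] A) (hcontr : ∀ a : A, ‖P a‖ ≤ ‖a‖)
    (hpos : ∀ a : A, 0 ≤ a → 0 ≤ P a) {a : A} (ha : IsSelfAdjoint a) :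
    P a * P a ≤ P (a * a) := by
  have h := kadison_unital (unitalExt P) (by ext <;> simp [unitalExt])
    (unitalExt_nonneg P hcontr hpos) (a := (a : Unitization ℂ A)) (ha.inr ℂ)
  have hinr : ∀ b : A, unitalExt P (b : Unitization ℂ A) = ((P b : A) : Unitization ℂ A) := by
    intro b
    ext <;> simp [unitalExt]
  have hPa := isSelfAdjoint_map_of_pos P hpos ha
  have hmul : ∀ {b : A}, IsSelfAdjoint b → IsSelfAdjoint (b * b) := fun hb =>
    (hb.commute_iff hb).1 (Commute.refl _)
  rw [← Unitization.inr_mul, hinr, hinr, ← Unitization.inr_mul] at h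
  exact (Unitization.inr_le_iff _ _ (hmul hPa) (isSelfAdjoint_map_of_pos P hpos (hmul ha))).1 h

/-- The first claim for self-adjoint elements, without the factor `1 / 2`. -/
theorem map_jordan_of_isSelfAdjoint {A : Type*} [NonUnitalCStarAlgebra A] [PartialOrder A]
    [StarOrderedRing A] (P : A →ₗ[ℂ] A) (hidem : ∀ a, P (P a) = P a)
    (hcontr : ∀ a : A, ‖P a‖ ≤ ‖a‖) (hpos : ∀ a : A, 0 ≤ a → 0 ≤ P a)
    {a b : A} (ha : IsSelfAdjoint a) (hb : IsSelfAdjoint b) :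
    P (P a * P b + P b * P a) = P (a * P b + P b * a) := by
  have hPb := isSelfAdjoint_map_of_pos P hpos hb
  set D := P (a * a) - P (P a * P a) with hD
  set E := P (a * P b + P b * a) - P (P a * P b + P b * P a) with hE
  have main : ∀ t : ℤ, 0 ≤ D + t • E := by
    intro t
    have hs : IsSelfAdjoint (a + t • P b) := ha.add (by simp [IsSelfAdjoint, hPb.star_eq])
    have h := hpos _ (sub_nonneg.2 (kadison P hcontr hpos hs))
    convert h using 1
    simp only [hD, hE, map_add, map_sub, map_zsmul, hidem, add_mul, mul_add, smul_mul_assoc,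
      mul_smul_comm]
    module
  have h1 : -E ≤ 0 := nonpos_of_forall_nsmul_le (c := D) fun n _ => by
    have := main n
    rw [natCast_zsmul] at this
    rwa [smul_neg, neg_le_iff_add_nonneg]
  have h2 : E ≤ 0 := nonpos_of_forall_nsmul_le (c := D) fun n _ => by
    have := main (-n)
    rw [neg_smul, natCast_zsmul, ← sub_eq_add_neg] at this
    exact sub_nonneg.1 this
  exact (sub_eq_zero.1 (le_antisymm h2 (neg_nonpos.1 h1))).symm

/-- Effros–Størmer: a positive contractive projection `P` on a C*-algebra satisfies
`P (P a ∘ P b) = P (a ∘ P b)`; if moreover the range of `P` is closed under the Jordan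
product then `P` is a Jordan conditional expectation. -/
theorem stmt_11 {A : Type*} [NonUnitalCStarAlgebra A] [PartialOrder A] [StarOrderedRing A]
    (P : A →ₗ[ℂ] A) (hidem : ∀ a, P (P a) = P a)
    (hcontr : ∀ a : A, ‖P a‖ ≤ ‖a‖) (hpos : ∀ a : A, 0 ≤ a → 0 ≤ P a) :
    (∀ a b : A, P ((2 : ℂ)⁻¹ • (P a * P b + P b * P a)) =
        P ((2 : ℂ)⁻¹ • (a * P b + P b * a))) ∧
      ((∀ x y : A, x ∈ Set.range P → y ∈ Set.range P →
          (2 : ℂ)⁻¹ • (x * y + y * x) ∈ Set.range P) →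
        ∀ a b : A, P ((2 : ℂ)⁻¹ • (a * P b + P b * a)) =
          (2 : ℂ)⁻¹ • (P a * P b + P b * P a)) := by
  have first : ∀ a b : A, P ((2 : ℂ)⁻¹ • (P a * P b + P b * P a)) =
      P ((2 : ℂ)⁻¹ • (a * P b + P b * a)) := by
    intro a b
    have key := fun {x y : A} (hx : IsSelfAdjoint x) (hy : IsSelfAdjoint y) =>
      map_jordan_of_isSelfAdjoint P hidem hcontr hpos hx hy
    obtain ⟨a₁, a₂, ha₁, ha₂, rfl⟩ : ∃ a₁ a₂ : A, IsSelfAdjoint a₁ ∧ IsSelfAdjoint a₂ ∧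
        a = a₁ + Complex.I • a₂ :=
      ⟨realPart a, imaginaryPart a, (realPart a).2, (imaginaryPart a).2,
        (realPart_add_I_smul_imaginaryPart a).symm⟩
    obtain ⟨b₁, b₂, hb₁, hb₂, rfl⟩ : ∃ b₁ b₂ : A, IsSelfAdjoint b₁ ∧ IsSelfAdjoint b₂ ∧
        b = b₁ + Complex.I • b₂ :=
      ⟨realPart b, imaginaryPart b, (realPart b).2, (imaginaryPart b).2,
        (realPart_add_I_smul_imaginaryPart b).symm⟩
    have k₁₁ := key ha₁ hb₁
    have k₁₂ := key ha₁ hb₂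
    have k₂₁ := key ha₂ hb₁
    have k₂₂ := key ha₂ hb₂
    simp only [map_add] at k₁₁ k₁₂ k₂₁ k₂₂
    simp only [map_add, map_smul, add_mul, mul_add, smul_mul_assoc, mul_smul_comm]
    congr 1
    linear_combination (norm := module) k₁₁ + Complex.I • k₁₂ + Complex.I • k₂₁ +
      (Complex.I * Complex.I) • k₂₂
  refine ⟨first, fun hrange a b => ?_⟩
  obtain ⟨c, hc⟩ := hrange _ _ ⟨a, rfl⟩ ⟨b, rfl⟩
  rw [← first, ← hc, hidem]
end
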